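/- For every integer d ≥ 1, the genus 1 Hurwitz numbers satisfy the recursion H_{1,d} = (d/6) · binom(d,2) · (2d−1) · H_{0,d} + ∑_{i=1}^{d−1} binom(2d−2, 2i−2) · (4d−2) · i² · (d−i) · H_{0,i} · H_{1,d−i} in ℚ. -/

import Mathlib

/-- The number of `r`-tuples `(τ₁, …, τ_r)` of transpositions in the symmetric group on
`d` letters whose product `τ₁ ⬝ τ₂ ⋯ τ_r` is the identity and which generate a subgroup
acting transitively on the `d` letters. -/
noncomputable def hurwitzTupleCount (d r : ℕ) : ℕ :=
  Nat.card {τ : Fin r → Equiv.Perm (Fin d) //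
    (∀ i, (τ i).IsSwap) ∧ (List.ofFn τ).prod = 1 ∧
    ∀ x y : Fin d, ∃ σ ∈ Subgroup.closure (Set.range τ), σ x = y}

/-- The Hurwitz number `H_{g,d}`: `1/d!` times the number of `(2g - 2 + 2d)`-tuples of
transpositions in `S_d` with product the identity, generating a transitive subgroup. -/
noncomputable def hurwitzNumber (g d : ℕ) : ℚ :=
  (hurwitzTupleCount d (2 * g + 2 * d - 2) : ℚ) / (Nat.factorial d : ℚ)

/-
Let `τ` be the exponential generating series of all factorizations of the identity into
transpositions, where `u` marks the transpositions and `X` the sheets. By the exponential formula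
`F = log τ` is the series of the transitive ones. Write `θ = X d/dX`.

The sum of all transpositions acts on `V^⊗d`. On traces weighted by a torus element, conjugation by
the Vandermonde determinant turns it into the Laplacian of the torus, so that the alternants are
eigenvectors, with eigenvalues the content sums of partitions. Expanding a power of the first power
sum by the Jacobi–Trudi identity, one obtains Frobenius' formula for `τ`.

The partitions with at most `n` rows contribute, up to a monomial factor, a Hankel determinant of
iterated derivatives of a single series, so the Desnanot–Jacobi identity relates three consecutive
contributions. As `n` grows they converge to `τ`, and the relation becomes the Toda equation
`τ θ²τ - (θτ)² = X τ(e^u X) τ(e^{-u} X)`. Its logarithmic derivative is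
`θ³F = θ²F + (θF(e^u X) - 2 θF + θF(e^{-u} X)) θ²F`.

Comparing the two lowest orders in `u`, the genus `0` and `1` parts `A` and `B` of `F` satisfy
`θT = T + (θT) T` for `T = θ²A`, the equation of the tree function, and its linearization with a
source term. The latter integrates to `24 (1 - T) θB = θT - T`, and taking coefficients gives the
recursion.
-/

namespace Hurwitz

open Equiv Finset

section OrderedProduct

variable {ι κ M N : Type*} [Fintype ι] [LinearOrder ι] [Fintype κ] [LinearOrder κ]
  [Monoid M] [Monoid N]

/-- The product of a family in a noncommutative monoid, taken in the order of its index type. -/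
def orderedProd (f : ι → M) : M :=
  ((univ : Finset ι).sort.map f).prod

theorem orderedProd_eq_prod_ofFn {r : ℕ} (f : Fin r → M) :
    orderedProd f = (List.ofFn f).prod := by
  rw [orderedProd, Fin.sort_univ, List.ofFn_eq_map]

theorem map_orderedProd (φ : M →* N) (f : ι → M) :
    φ (orderedProd f) = orderedProd fun i => φ (f i) := by
  simp only [orderedProd, map_list_prod, List.map_map, Function.comp_def]

theorem orderedProd_comp_of_strictMono {e : ι → κ} (he : StrictMono e) {f : κ → M}
    (hf : ∀ k ∉ Set.range e, f k = 1) : orderedProd (fun i => f (e i)) = orderedProd f := by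
  classical
  have hsort : (univ : Finset ι).sort.map e =
      (univ : Finset κ).sort.filter (· ∈ Set.range e) :=
    (he.sortedLT_listMap.2 univ.sortedLT_sort).eq_of_mem_iff
      (univ.sortedLT_sort.pairwise.filter _).sortedLT (by simp)
  have hlist (l : List κ) : ((l.filter (· ∈ Set.range e)).map f).prod = (l.map f).prod := by
    induction l with
    | nil => rfl
    | cons k l ih =>
      by_cases hk : k ∈ Set.range e
      · simp only [List.filter_cons, hk, decide_true, if_true, List.map_cons, List.prod_cons, ih]
      · simp only [List.filter_cons, hk, decide_false, Bool.false_eq_true, if_false, ih,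
          List.map_cons, List.prod_cons, hf k hk, one_mul]
  rw [orderedProd, ← Function.comp_def f e, ← List.map_map, hsort, hlist, orderedProd]

theorem orderedProd_mul {f g : ι → M} (h : ∀ i j, Commute (f i) (g j)) :
    orderedProd (fun i => f i * g i) = orderedProd f * orderedProd g := by
  have hlist (l : List ι) :
      (l.map fun i => f i * g i).prod = (l.map f).prod * (l.map g).prod := by
    induction l with
    | nil => simp
    | cons i l ih =>
      have hcomm : Commute (g i) (l.map f).prod :=
        Commute.list_prod_right _ _ (by simpa using fun j _ => (h j i).symm)
      simp only [List.map_cons, List.prod_cons, ih, mul_assoc, hcomm.left_comm]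
  exact hlist _

end OrderedProduct

section Factorizations

variable (ι α : Type*) [Fintype ι] [LinearOrder ι] [DecidableEq α]

/-- The families of transpositions of `α` indexed by `ι` with ordered product the identity:
monodromy data of simply branched covers that need not be connected. -/
def factorizations : Set (ι → Perm α) :=
  {τ | (∀ i, (τ i).IsSwap) ∧ orderedProd τ = 1}

/-- The factorizations generating a transitive group: monodromy data of connected covers. -/
def transitiveFactorizations : Set (ι → Perm α) :=
  {τ ∈ factorizations ι α | ∀ x y, ∃ σ ∈ Subgroup.closure (Set.range τ), σ x = y}

theorem hurwitzTupleCount_eq_card (d r : ℕ) :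
    hurwitzTupleCount d r = Nat.card (transitiveFactorizations (Fin r) (Fin d)) := by
  simp only [hurwitzTupleCount, transitiveFactorizations, factorizations,
    orderedProd_eq_prod_ofFn, Set.mem_ofPred_eq, and_assoc, Set.coe_ofPred]

variable {ι α} {κ β : Type*} [Fintype κ] [LinearOrder κ] [DecidableEq β]

theorem isSwap_permCongr_iff (f : α ≃ β) {σ : Perm α} :
    (f.permCongr σ).IsSwap ↔ σ.IsSwap := by
  refine ⟨fun ⟨x, y, hxy, h⟩ => ⟨f.symm x, f.symm y, f.symm.injective.ne hxy, ?_⟩,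
    fun ⟨x, y, hxy, h⟩ => ⟨f x, f y, f.injective.ne hxy, ?_⟩⟩
  · rw [← symm_trans_swap_trans, ← h]
    ext; simp
  · rw [h]; exact symm_trans_swap_trans x y f

theorem relabel_mem_factorizations_iff (e : κ ≃o ι) (f : α ≃ β) (τ : ι → Perm α) :
    (fun k => f.permCongr (τ (e k))) ∈ factorizations κ β ↔ τ ∈ factorizations ι α := by
  have hprod : orderedProd (fun k => f.permCongr (τ (e k))) = f.permCongrHom (orderedProd τ) := by
    rw [orderedProd_comp_of_strictMono (f := fun i => f.permCongr (τ i)) e.strictMono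
      fun k hk => absurd (e.surjective k) hk]
    exact (map_orderedProd f.permCongrHom.toMonoidHom τ).symm
  simp only [factorizations, Set.mem_ofPred_eq, isSwap_permCongr_iff, hprod,
    EmbeddingLike.map_eq_one_iff, e.surjective.forall]

theorem relabel_mem_transitiveFactorizations_iff (e : κ ≃o ι) (f : α ≃ β) (τ : ι → Perm α) :
    (fun k => f.permCongr (τ (e k))) ∈ transitiveFactorizations κ β ↔
      τ ∈ transitiveFactorizations ι α := by
  have hclosure : Subgroup.closure (Set.range fun k => f.permCongr (τ (e k))) =
      (Subgroup.closure (Set.range τ)).map f.permCongrHom.toMonoidHom := by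
    rw [MonoidHom.map_closure, ← Set.range_comp, ← e.surjective.range_comp]
    rfl
  simp only [transitiveFactorizations, Set.mem_ofPred_eq, relabel_mem_factorizations_iff, hclosure,
    Subgroup.mem_map, exists_exists_and_eq_and, f.surjective.forall]
  simp

theorem card_factorizations_congr (e : κ ≃o ι) (f : α ≃ β) :
    Nat.card (factorizations ι α) = Nat.card (factorizations κ β) :=
  Nat.card_congr <| (e.symm.toEquiv.arrowCongr f.permCongr).subtypeEquiv fun τ =>
    (relabel_mem_factorizations_iff e f τ).symm

theorem card_transitiveFactorizations_congr (e : κ ≃o ι) (f : α ≃ β) :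
    Nat.card (transitiveFactorizations ι α) = Nat.card (transitiveFactorizations κ β) :=
  Nat.card_congr <| (e.symm.toEquiv.arrowCongr f.permCongr).subtypeEquiv fun τ =>
    (relabel_mem_transitiveFactorizations_iff e f τ).symm

end Factorizations

section Splitting

theorem disjoint_ofSubtype_compl {α : Type*} {p : α → Prop} [DecidablePred p]
    (f : Perm {x // p x}) (g : Perm {x // ¬ p x}) :
    (Perm.ofSubtype f).Disjoint (Perm.ofSubtype g) := fun x =>
  if hx : p x then .inr (Perm.ofSubtype_apply_of_not_mem g (not_not.2 hx))
  else .inl (Perm.ofSubtype_apply_of_not_mem f hx)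

variable {ι α : Type*} [DecidableEq α]

/-- The orbit of `a₀` under the group generated by the family: the sheets of the connected
component of `a₀`. -/
noncomputable def component [Fintype α] (a₀ : α) (τ : ι → Perm α) : Finset α := by
  classical exact {x | ∃ σ ∈ Subgroup.closure (Set.range τ), σ a₀ = x}

/-- The indices of the permutations that move a point of `A`. -/
def activeIndices [Fintype ι] (A : Finset α) (τ : ι → Perm α) : Finset ι :=
  {i | ∃ x ∈ A, τ i x ≠ x}

theorem mem_component [Fintype α] {a₀ x : α} {τ : ι → Perm α} :
    x ∈ component a₀ τ ↔ ∃ σ ∈ Subgroup.closure (Set.range τ), σ a₀ = x := by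
  simp [component]

theorem mem_activeIndices [Fintype ι] {A : Finset α} {τ : ι → Perm α} {i : ι} :
    i ∈ activeIndices A τ ↔ ∃ x ∈ A, τ i x ≠ x := by
  simp [activeIndices]

theorem apply_mem_component_iff [Fintype α] (a₀ : α) (τ : ι → Perm α) (i : ι) (x : α) :
    τ i x ∈ component a₀ τ ↔ x ∈ component a₀ τ := by
  have hi : τ i ∈ Subgroup.closure (Set.range τ) := Subgroup.subset_closure ⟨i, rfl⟩
  simp only [mem_component]
  constructor
  · rintro ⟨σ, hσ, hx⟩
    exact ⟨(τ i)⁻¹ * σ, mul_mem (inv_mem hi) hσ, by simp [hx]⟩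
  · rintro ⟨σ, hσ, rfl⟩
    exact ⟨τ i * σ, mul_mem hi hσ, rfl⟩

variable [DecidableEq ι] {A : Finset α} {R : Finset ι}

/-- The family acting on `A` through `a` at the indices in `R`, and on the complement of `A`
through `b` at the other indices. -/
def glue (a : {i // i ∈ R} → Perm {x // x ∈ A}) (b : {i // i ∉ R} → Perm {x // x ∉ A}) :
    ι → Perm α := fun i =>
  if h : i ∈ R then Perm.ofSubtype (a ⟨i, h⟩) else Perm.ofSubtype (b ⟨i, h⟩)

section

variable (a : {i // i ∈ R} → Perm {x // x ∈ A}) (b : {i // i ∉ R} → Perm {x // x ∉ A})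

theorem glue_of_mem (i : {i // i ∈ R}) : glue a b i = Perm.ofSubtype (a i) :=
  dif_pos i.2

theorem glue_of_notMem (i : {i // i ∉ R}) : glue a b i = Perm.ofSubtype (b i) :=
  dif_neg i.2

theorem exists_mem_closure_of_mem_closure_glue {σ : Perm α}
    (hσ : σ ∈ Subgroup.closure (Set.range (glue a b))) :
    ∃ σ' ∈ Subgroup.closure (Set.range a), ∀ x : {x // x ∈ A}, σ x = σ' x := by
  induction hσ using Subgroup.closure_induction with
  | mem _ h =>
    obtain ⟨i, rfl⟩ := h
    by_cases hi : i ∈ R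
    · exact ⟨a ⟨i, hi⟩, Subgroup.subset_closure ⟨_, rfl⟩, fun x => by
        rw [glue_of_mem a b ⟨i, hi⟩, Perm.ofSubtype_apply_coe]⟩
    · exact ⟨1, one_mem _, fun x => by
        rw [glue_of_notMem a b ⟨i, hi⟩, Perm.one_apply]
        exact Perm.ofSubtype_apply_of_not_mem _ (not_not.2 x.2)⟩
  | one => exact ⟨1, one_mem _, fun _ => rfl⟩
  | mul σ ρ _ _ hσ hρ =>
    obtain ⟨σ', hσ', hσA⟩ := hσ
    obtain ⟨ρ', hρ', hρA⟩ := hρ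
    exact ⟨σ' * ρ', mul_mem hσ' hρ', fun x => by simp only [Perm.mul_apply, hρA, hσA]⟩
  | inv σ _ hσ =>
    obtain ⟨σ', hσ', hσA⟩ := hσ
    exact ⟨σ'⁻¹, inv_mem hσ', fun x => by
      rw [Perm.inv_eq_iff_eq, hσA, ← Perm.mul_apply, mul_inv_cancel, Perm.one_apply]⟩

theorem ofSubtype_mem_closure_glue {σ : Perm {x // x ∈ A}}
    (hσ : σ ∈ Subgroup.closure (Set.range a)) :
    Perm.ofSubtype σ ∈ Subgroup.closure (Set.range (glue a b)) := by
  have hle : (Subgroup.closure (Set.range a)).map (Perm.ofSubtype (p := (· ∈ A))) ≤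
      Subgroup.closure (Set.range (glue a b)) := by
    rw [MonoidHom.map_closure]
    apply Subgroup.closure_mono
    rintro _ ⟨_, ⟨i, rfl⟩, rfl⟩
    exact ⟨i, glue_of_mem a b i⟩
  exact hle ⟨σ, hσ, rfl⟩

end

theorem glue_inj {a a' : {i // i ∈ R} → Perm {x // x ∈ A}}
    {b b' : {i // i ∉ R} → Perm {x // x ∉ A}} :
    glue a b = glue a' b' ↔ a = a' ∧ b = b' := by
  refine ⟨fun h => ⟨funext fun i => ?_, funext fun i => ?_⟩, by rintro ⟨rfl, rfl⟩; rfl⟩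
  · have hi := congrFun h i
    rw [glue_of_mem, glue_of_mem] at hi
    exact Perm.ofSubtype_injective hi
  · have hi := congrFun h i
    rw [glue_of_notMem, glue_of_notMem] at hi
    exact Perm.ofSubtype_injective hi

theorem isSwap_ofSubtype_iff {p : α → Prop} [DecidablePred p] {f : Perm (Subtype p)} :
    (Perm.ofSubtype f).IsSwap ↔ f.IsSwap := by
  refine ⟨fun ⟨x, y, hxy, h⟩ => ?_, Perm.IsSwap.of_subtype_isSwap⟩
  have hx : p x := by
    by_contra hx
    refine hxy ?_
    rw [← Perm.ofSubtype_apply_of_not_mem f hx, h, swap_apply_left]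
  have hy : p y := by
    by_contra hy
    refine hxy.symm ?_
    rw [← Perm.ofSubtype_apply_of_not_mem f hy, h, swap_apply_right]
  refine ⟨⟨x, hx⟩, ⟨y, hy⟩, by simpa using hxy, Perm.ofSubtype_injective ?_⟩
  rw [h, Perm.ofSubtype_swap_eq]

theorem eq_or_eq_apply_of_isSwap {σ : Perm α} (hσ : σ.IsSwap) {x z : α} (hx : σ x ≠ x)
    (hz : σ z ≠ z) : x = z ∨ x = σ z := by
  obtain ⟨u, v, -, rfl⟩ := hσ
  rcases (swap_apply_ne_self_iff.1 hx).2 with rfl | rfl <;>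
    rcases (swap_apply_ne_self_iff.1 hz).2 with rfl | rfl <;> simp

theorem activeIndices_glue [Fintype ι] {a : {i // i ∈ R} → Perm {x // x ∈ A}}
    (ha : ∀ i, (a i).IsSwap)
    (b : {i // i ∉ R} → Perm {x // x ∉ A}) :
    activeIndices A (glue a b) = R := by
  ext i
  rw [mem_activeIndices]
  constructor
  · rintro ⟨x, hx, hmove⟩
    by_contra hi
    rw [glue_of_notMem a b ⟨i, hi⟩] at hmove
    exact hmove (Perm.ofSubtype_apply_of_not_mem _ (not_not.2 hx))
  · intro hi
    obtain ⟨x, y, hxy, hswap⟩ := ha ⟨i, hi⟩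
    refine ⟨x, x.2, ?_⟩
    rw [glue_of_mem a b ⟨i, hi⟩, Perm.ofSubtype_apply_coe, hswap, swap_apply_left]
    exact Subtype.coe_injective.ne hxy.symm

variable [Fintype α]

theorem component_glue_eq_iff (a : {i // i ∈ R} → Perm {x // x ∈ A})
    (b : {i // i ∉ R} → Perm {x // x ∉ A}) {a₀ : α} (ha₀ : a₀ ∈ A) :
    component a₀ (glue a b) = A ↔ ∀ x y, ∃ σ ∈ Subgroup.closure (Set.range a), σ x = y := by
  constructor
  · intro hA x y
    obtain ⟨σ, hσ, hx⟩ := mem_component.1 (hA.ge x.2)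
    obtain ⟨ρ, hρ, hy⟩ := mem_component.1 (hA.ge y.2)
    obtain ⟨π, hπ, hπA⟩ :=
      exists_mem_closure_of_mem_closure_glue a b (mul_mem hρ (inv_mem hσ))
    refine ⟨π, hπ, Subtype.ext ?_⟩
    rw [← hπA, Perm.mul_apply, ← hx, ← Perm.mul_apply σ⁻¹, inv_mul_cancel, Perm.one_apply,
      hy]
  · intro htrans
    ext x
    rw [mem_component]
    constructor
    · rintro ⟨σ, hσ, rfl⟩
      obtain ⟨π, -, hπA⟩ := exists_mem_closure_of_mem_closure_glue a b hσ
      rw [hπA ⟨a₀, ha₀⟩]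
      exact (π _).2
    · intro hx
      obtain ⟨σ, hσ, h⟩ := htrans ⟨a₀, ha₀⟩ ⟨x, hx⟩
      refine ⟨_, ofSubtype_mem_closure_glue a b hσ, ?_⟩
      rw [Perm.ofSubtype_apply_of_mem σ ha₀, h]

theorem exists_glue_eq [Fintype ι] {a₀ : α} {τ : ι → Perm α} (hτ : ∀ i, (τ i).IsSwap)
    (hA : component a₀ τ = A) (hR : activeIndices A τ = R) :
    ∃ (a : {i // i ∈ R} → Perm {x // x ∈ A}) (b : {i // i ∉ R} → Perm {x // x ∉ A}),
      glue a b = τ := by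
  have hinv (i : ι) (x : α) : τ i x ∈ A ↔ x ∈ A := hA ▸ apply_mem_component_iff a₀ τ i x
  refine ⟨fun i => (τ i).subtypePerm (hinv i), fun i => (τ i).subtypePerm fun x =>
    not_congr (hinv i x), funext fun i => ?_⟩
  by_cases hi : i ∈ R
  · rw [glue_of_mem _ _ ⟨i, hi⟩]
    obtain ⟨z, hz, hmove⟩ := mem_activeIndices.1 (hR.ge hi)
    refine Perm.ofSubtype_subtypePerm _ fun x hx => ?_
    rcases eq_or_eq_apply_of_isSwap (hτ i) hx hmove with rfl | rfl
    exacts [hz, (hinv i z).2 hz]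
  · rw [glue_of_notMem _ _ ⟨i, hi⟩]
    exact Perm.ofSubtype_subtypePerm _ fun x hx hxA =>
      hi (hR.le (mem_activeIndices.2 ⟨x, hxA, hx⟩))

end Splitting

section ComponentCount

variable {ι α : Type*} [Fintype ι] [LinearOrder ι] [DecidableEq α]
  {A : Finset α} {R : Finset ι}

theorem orderedProd_glue (a : {i // i ∈ R} → Perm {x // x ∈ A})
    (b : {i // i ∉ R} → Perm {x // x ∉ A}) :
    orderedProd (glue a b) =
      Perm.ofSubtype (orderedProd a) * Perm.ofSubtype (orderedProd b) := by
  let f (i : ι) : Perm α := if h : i ∈ R then Perm.ofSubtype (a ⟨i, h⟩) else 1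
  let g (i : ι) : Perm α := if h : i ∈ R then 1 else Perm.ofSubtype (b ⟨i, h⟩)
  have hfg : glue a b = fun i => f i * g i := by
    funext i
    by_cases hi : i ∈ R <;> simp [glue, f, g, hi]
  have hcomm (i j : ι) : Commute (f i) (g j) := by
    by_cases hi : i ∈ R <;> by_cases hj : j ∈ R <;>
      simp [f, g, hi, hj, (disjoint_ofSubtype_compl _ _).commute]
  have hf : orderedProd f = Perm.ofSubtype (orderedProd a) := by
    rw [map_orderedProd, ← orderedProd_comp_of_strictMono (Subtype.strictMono_coe (· ∈ R))
      fun i hi => dif_neg (by simpa using hi)]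
    exact congrArg orderedProd (funext fun i => dif_pos i.2)
  have hg : orderedProd g = Perm.ofSubtype (orderedProd b) := by
    rw [map_orderedProd, ← orderedProd_comp_of_strictMono (Subtype.strictMono_coe (· ∉ R))
      fun i hi => dif_pos (by simpa using hi)]
    exact congrArg orderedProd (funext fun i => dif_neg i.2)
  rw [hfg, orderedProd_mul hcomm, hf, hg]

theorem glue_mem_factorizations_iff {a : {i // i ∈ R} → Perm {x // x ∈ A}}
    {b : {i // i ∉ R} → Perm {x // x ∉ A}} :
    glue a b ∈ factorizations ι α ↔
      a ∈ factorizations {i // i ∈ R} {x // x ∈ A} ∧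
        b ∈ factorizations {i // i ∉ R} {x // x ∉ A} := by
  have hswap : (∀ i, (glue a b i).IsSwap) ↔ (∀ i, (a i).IsSwap) ∧ ∀ i, (b i).IsSwap := by
    constructor
    · exact fun h => ⟨fun i => isSwap_ofSubtype_iff.1 (glue_of_mem a b i ▸ h i),
        fun i => isSwap_ofSubtype_iff.1 (glue_of_notMem a b i ▸ h i)⟩
    · rintro ⟨ha, hb⟩ i
      by_cases hi : i ∈ R
      · exact glue_of_mem a b ⟨i, hi⟩ ▸ isSwap_ofSubtype_iff.2 (ha _)
      · exact glue_of_notMem a b ⟨i, hi⟩ ▸ isSwap_ofSubtype_iff.2 (hb _)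
  simp only [factorizations, Set.mem_ofPred_eq, hswap, orderedProd_glue,
    (disjoint_ofSubtype_compl _ _).mul_eq_one_iff,
    map_eq_one_iff _ Perm.ofSubtype_injective, and_and_and_comm]

variable [Fintype α]

theorem card_fiber_component_activeIndices {a₀ : α} (ha₀ : a₀ ∈ A) :
    Nat.card {τ : factorizations ι α // component a₀ τ.1 = A ∧ activeIndices A τ.1 = R} =
      Nat.card (transitiveFactorizations {i // i ∈ R} {x // x ∈ A}) *
        Nat.card (factorizations {i // i ∉ R} {x // x ∉ A}) := by
  rw [← Nat.card_prod]
  symm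
  refine Nat.card_congr (Equiv.ofBijective (fun p => ⟨⟨glue p.1.1 p.2.1,
    glue_mem_factorizations_iff.2 ⟨p.1.2.1, p.2.2⟩⟩,
    (component_glue_eq_iff _ _ ha₀).2 p.1.2.2, activeIndices_glue p.1.2.1.1 _⟩) ⟨?_, ?_⟩)
  · intro p q hpq
    obtain ⟨ha, hb⟩ := glue_inj.1 (congrArg (fun τ => τ.1.1) hpq)
    exact Prod.ext (Subtype.ext ha) (Subtype.ext hb)
  · rintro ⟨⟨τ, hτ⟩, hA, hR⟩
    obtain ⟨a, b, rfl⟩ := exists_glue_eq hτ.1 hA hR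
    obtain ⟨ha, hb⟩ := glue_mem_factorizations_iff.1 hτ
    exact ⟨⟨⟨a, ha, (component_glue_eq_iff a b ha₀).1 hA⟩, ⟨b, hb⟩⟩, rfl⟩

theorem card_factorizations_eq_sum (a₀ : α) :
    Nat.card (factorizations ι α) = ∑ A : Finset α, if a₀ ∈ A then ∑ R : Finset ι,
      Nat.card (transitiveFactorizations {i // i ∈ R} {x // x ∈ A}) *
        Nat.card (factorizations {i // i ∉ R} {x // x ∉ A}) else 0 := by
  let φ (τ : factorizations ι α) : Finset α × Finset ι :=
    (component a₀ τ.1, activeIndices (component a₀ τ.1) τ.1)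
  rw [← Nat.card_congr (Equiv.sigmaFiberEquiv φ), Nat.card_sigma, Fintype.sum_prod_type]
  refine sum_congr rfl fun A _ => ?_
  split_ifs with ha₀
  · refine sum_congr rfl fun R _ => ?_
    rw [← card_fiber_component_activeIndices ha₀]
    refine Nat.card_congr (Equiv.subtypeEquivRight fun τ => ?_)
    rw [Prod.mk.injEq]
    exact and_congr_right fun hA => by rw [hA]
  · refine sum_eq_zero fun R _ => Nat.card_eq_zero.2 (.inl ⟨fun τ => ha₀ ?_⟩)
    rw [← show component a₀ τ.1.1 = A from congrArg Prod.fst τ.2]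
    exact mem_component.2 ⟨1, one_mem _, rfl⟩

/-- The number of factorizations of the identity of `S_d` into `r` transpositions. -/
noncomputable def factorizationCount (d r : ℕ) : ℕ :=
  Nat.card (factorizations (Fin r) (Fin d))

theorem card_factorizations :
    Nat.card (factorizations ι α) = factorizationCount (Fintype.card α) (Fintype.card ι) :=
  card_factorizations_congr (Fintype.orderIsoFinOfCardEq ι rfl) (Fintype.equivFin α)

theorem card_transitiveFactorizations :
    Nat.card (transitiveFactorizations ι α) =
      hurwitzTupleCount (Fintype.card α) (Fintype.card ι) := by
  rw [hurwitzTupleCount_eq_card]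
  exact card_transitiveFactorizations_congr (Fintype.orderIsoFinOfCardEq ι rfl)
    (Fintype.equivFin α)

theorem sum_ite_mem_apply_card {M : Type*} [AddCommMonoid M] {d : ℕ}
    (hd : Fintype.card α = d + 1) (a₀ : α) (f : ℕ → M) :
    (∑ A : Finset α, if a₀ ∈ A then f #A else 0) =
      ∑ k ∈ range (d + 1), d.choose k • f (k + 1) := by
  have hcard : #(univ.erase a₀) = d := by rw [card_erase_of_mem (mem_univ a₀), card_univ, hd]; rfl
  rw [← powerset_univ, ← insert_erase (mem_univ a₀), sum_powerset_insert (notMem_erase a₀ univ),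
    sum_eq_zero fun B hB => if_neg fun h => notMem_erase a₀ _ (mem_powerset.1 hB h), zero_add]
  conv_rhs => rw [← hcard, ← sum_powerset_apply_card fun k => f (k + 1)]
  refine sum_congr rfl fun B hB => ?_
  rw [if_pos (mem_insert_self a₀ B),
    card_insert_of_notMem fun h => notMem_erase a₀ _ (mem_powerset.1 hB h)]

theorem factorizationCount_succ (d r : ℕ) :
    factorizationCount (d + 1) r = ∑ p ∈ antidiagonal d, ∑ q ∈ antidiagonal r,
      d.choose p.1 * r.choose q.1 *
        (hurwitzTupleCount (p.1 + 1) q.1 * factorizationCount p.2 q.2) := by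
  have hblock (A : Finset (Fin (d + 1))) (R : Finset (Fin r)) :
      Nat.card (transitiveFactorizations {i // i ∈ R} {x // x ∈ A}) *
        Nat.card (factorizations {i // i ∉ R} {x // x ∉ A}) =
      hurwitzTupleCount #A #R * factorizationCount (d + 1 - #A) (r - #R) := by
    simp only [card_transitiveFactorizations, card_factorizations, Fintype.card_subtype_compl,
      Fintype.card_coe, Fintype.card_fin]
  have hindices (k : ℕ) : ∑ R : Finset (Fin r),
      hurwitzTupleCount k #R * factorizationCount (d + 1 - k) (r - #R) =
      ∑ q ∈ antidiagonal r, r.choose q.1 *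
        (hurwitzTupleCount k q.1 * factorizationCount (d + 1 - k) q.2) := by
    rw [← powerset_univ, sum_powerset_apply_card fun s =>
      hurwitzTupleCount k s * factorizationCount (d + 1 - k) (r - s),
      Nat.sum_antidiagonal_eq_sum_range_succ_mk]
    simp only [card_univ, Fintype.card_fin, smul_eq_mul]
  rw [factorizationCount, card_factorizations_eq_sum 0]
  simp only [hblock, hindices]
  rw [sum_ite_mem_apply_card (Fintype.card_fin _) 0 fun k => ∑ q ∈ antidiagonal r, r.choose q.1 *
    (hurwitzTupleCount k q.1 * factorizationCount (d + 1 - k) q.2),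
    Nat.sum_antidiagonal_eq_sum_range_succ_mk]
  simp only [Nat.add_sub_add_right, smul_eq_mul, mul_sum, mul_assoc]

end ComponentCount

section Words

variable {κ ι : Type*} [Fintype κ]

/-- The exponent vector recording how often each letter occurs in the word `w`. -/
noncomputable def content (w : κ → ι) : ι →₀ ℕ :=
  ∑ k, Finsupp.single (w k) 1

theorem content_apply [DecidableEq ι] (w : κ → ι) (i : ι) :
    content w i = ∑ k, if w k = i then 1 else 0 := by
  simp only [content, Finsupp.finsetSum_apply, Finsupp.single_apply]

theorem content_update [DecidableEq κ] (w : κ → ι) (k : κ) (j : ι) :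
    content (Function.update w k j) + Finsupp.single (w k) 1 =
      content w + Finsupp.single j 1 := by
  simp only [content, ← Finset.add_sum_erase _ _ (mem_univ k), Function.update_self]
  rw [Finset.sum_congr rfl fun l hl => by rw [Function.update_of_ne (ne_of_mem_erase hl)]]
  abel

theorem sum_content [Fintype ι] (w : κ → ι) : ∑ i, content w i = Fintype.card κ := by
  classical
  simp only [content_apply]
  rw [sum_comm]
  simp

theorem injective_of_content_eq {e w : κ → ι} (he : Function.Injective e)
    (h : content w = content e) : Function.Injective w := by
  classical
  intro k l hkl
  by_contra hne
  have htwo : 2 ≤ content w (w k) := by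
    rw [content_apply]
    calc 2 = ∑ m ∈ {k, l}, if w m = w k then 1 else 0 := by simp [sum_pair hne, hkl]
      _ ≤ _ := sum_le_sum_of_subset (subset_univ _)
  have hone : content e (w k) ≤ 1 := by
    rw [content_apply, ← card_filter, card_le_one]
    intro a ha b hb
    exact he ((mem_filter.1 ha).2.trans (mem_filter.1 hb).2.symm)
  rw [h] at htwo
  lia

variable [DecidableEq ι] (κ) (R : Type*) [CommRing R]

/-- The diagonal matrix of the number of occurrences of the letter `i`. -/
noncomputable def countMatrix (i : ι) : Matrix (κ → ι) (κ → ι) R :=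
  Matrix.diagonal fun w => (content w i : R)

theorem sum_countMatrix [Fintype ι] :
    ∑ i, countMatrix κ R i = (Fintype.card κ : R) • (1 : Matrix (κ → ι) (κ → ι) R) := by
  ext w w'
  simp only [countMatrix, Matrix.sum_apply, Matrix.diagonal_apply, sum_ite_irrel, sum_const_zero,
    ← Nat.cast_sum, sum_content, Matrix.smul_apply, Matrix.one_apply, smul_eq_mul, mul_ite,
    mul_one, mul_zero]

variable [DecidableEq κ]

/-- On the tensor power `V^⊗κ` of the free module on `ι`, with its basis of words, the matrix of
the elementary matrix `E i j` acting as a derivation: one letter `i` is replaced by `j`. -/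
def replaceMatrix (i j : ι) : Matrix (κ → ι) (κ → ι) R :=
  fun w w' => ∑ k, if w k = i ∧ w' = Function.update w k j then 1 else 0

/-- The sum, over pairs of distinct positions carrying `i` and `j`, of their exchange. -/
def exchangeMatrix (i j : ι) : Matrix (κ → ι) (κ → ι) R :=
  fun w w' => ∑ k, ∑ l ∈ univ.erase k, if w k = i ∧ w l = j ∧ w' = w ∘ swap k l then 1 else 0

variable (ι) {κ} in
/-- The matrix of a permutation of positions acting on words. -/
def permMatrix (σ : Perm κ) : Matrix (κ → ι) (κ → ι) R :=
  fun w w' => if w' = w ∘ σ then 1 else 0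

variable (ι) in
open scoped Classical in
/-- The sum of all transpositions of positions, acting on words. -/
noncomputable def swapSumMatrix : Matrix (κ → ι) (κ → ι) R :=
  ∑ t : Perm κ with t.IsSwap, permMatrix ι R t

theorem replaceMatrix_self (i : ι) : replaceMatrix κ R i i = countMatrix κ R i := by
  ext w w'
  have hterm (k : κ) : (if w k = i ∧ w' = Function.update w k i then (1 : R) else 0) =
      if w = w' then if w k = i then 1 else 0 else 0 := by
    by_cases hk : w k = i
    · simp [← hk, eq_comm]
    · simp [hk]
  simp only [replaceMatrix, hterm, countMatrix, Matrix.diagonal_apply, content_apply,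
    Nat.cast_sum, Nat.cast_ite, Nat.cast_one, Nat.cast_zero, sum_ite_irrel, sum_const_zero]

theorem exchangeMatrix_comm (i j : ι) : exchangeMatrix κ R i j = exchangeMatrix κ R j i := by
  ext w w'
  rw [exchangeMatrix, sum_comm' (t' := univ) (s' := univ.erase) (by simp [eq_comm])]
  simp only [exchangeMatrix, swap_comm, and_left_comm]

open scoped Classical in
theorem sum_erase_swap {M : Type*} [AddCommMonoid M] (f : Perm κ → M) :
    ∑ k, ∑ l ∈ univ.erase k, f (swap k l) = 2 • ∑ t with t.IsSwap, f t := by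
  have hsupport (t : Perm κ) (ht : t ∈ univ.filter Perm.IsSwap) :
      2 • f t = ∑ _ ∈ t.support, f t := by
    rw [sum_const, Perm.card_support_eq_two.2 (mem_filter.1 ht).2]
  rw [smul_sum, sum_congr rfl hsupport,
    sum_comm' (t' := univ) (s' := fun k => {t : Perm κ | t.IsSwap ∧ t k ≠ k}) (by simp)]
  refine sum_congr rfl fun k _ => ?_
  refine sum_nbij' (fun l => swap k l) (fun t => t k) ?_ ?_ ?_ ?_ fun _ _ => rfl
  · exact fun l hl => by
      simpa [(ne_of_mem_erase hl)] using ⟨k, l, (ne_of_mem_erase hl).symm, rfl⟩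
  · simp
  · simp
  · intro t ht
    obtain ⟨⟨x, y, hxy, rfl⟩, hk⟩ := (mem_filter.1 ht).2
    rcases (swap_apply_ne_self_iff.1 hk).2 with rfl | rfl
    · simp
    · simp [swap_comm]

variable [Fintype ι]

theorem replaceMatrix_mul_apply (i j : ι) (B : Matrix (κ → ι) (κ → ι) R) (w w' : κ → ι) :
    (replaceMatrix κ R i j * B) w w' =
      ∑ k, if w k = i then B (Function.update w k j) w' else 0 := by
  simp only [Matrix.mul_apply, replaceMatrix, sum_mul]
  rw [sum_comm]
  simp [ite_and]

theorem replaceMatrix_mul_replaceMatrix (i j : ι) :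
    replaceMatrix κ R i j * replaceMatrix κ R j i =
      exchangeMatrix κ R i j + countMatrix κ R i := by
  ext w w'
  have hother {k l : κ} (hkl : l ∈ univ.erase k) (hk : w k = i) :
      (if Function.update w k j l = j ∧ w' = Function.update (Function.update w k j) l i
        then (1 : R) else 0) = if w k = i ∧ w l = j ∧ w' = w ∘ swap k l then 1 else 0 := by
    rw [Function.update_of_ne (ne_of_mem_erase hkl), comp_swap_eq_update,
      Function.update_comm (ne_of_mem_erase hkl)]
    congr! 1
    grind
  have hterm (k : κ) : (if w k = i then replaceMatrix κ R j i (Function.update w k j) w' else 0) =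
      (∑ l ∈ univ.erase k, if w k = i ∧ w l = j ∧ w' = w ∘ swap k l then 1 else 0) +
        if w k = i ∧ w' = Function.update w k i then 1 else 0 := by
    by_cases hk : w k = i
    · rw [if_pos hk, replaceMatrix, ← sum_erase_add _ _ (mem_univ k),
        sum_congr rfl fun l hl => hother hl hk]
      simp [hk]
    · simp [hk]
  rw [replaceMatrix_mul_apply, sum_congr rfl fun k _ => hterm k, sum_add_distrib,
    ← replaceMatrix_self]
  rfl

theorem sum_exchangeMatrix :
    ∑ i, ∑ j, exchangeMatrix κ R i j = 2 • swapSumMatrix κ ι R := by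
  classical
  rw [swapSumMatrix, ← sum_erase_swap]
  ext w w'
  simp only [Matrix.sum_apply, exchangeMatrix, permMatrix]
  rw [sum_comm_cycle]
  refine sum_congr rfl fun k _ => ?_
  rw [sum_comm_cycle]
  simp [ite_and]

variable {κ}

theorem permMatrix_mul_apply (σ : Perm κ) (B : Matrix (κ → ι) (κ → ι) R) (w w' : κ → ι) :
    (permMatrix ι R σ * B) w w' = B (w ∘ σ) w' := by
  simp [Matrix.mul_apply, permMatrix]

theorem permMatrix_mul (σ ρ : Perm κ) :
    permMatrix ι R σ * permMatrix ι R ρ = permMatrix ι R (σ * ρ) := by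
  ext w w'
  rw [permMatrix_mul_apply]
  rfl

theorem commute_replaceMatrix_permMatrix (i j : ι) (σ : Perm κ) :
    Commute (replaceMatrix κ R i j) (permMatrix ι R σ) := by
  ext w w'
  rw [permMatrix_mul_apply, replaceMatrix_mul_apply, replaceMatrix, ← Equiv.sum_comp σ]
  simp [permMatrix, Function.update_comp_equiv, ite_and]

theorem commute_replaceMatrix_swapSumMatrix (i j : ι) :
    Commute (replaceMatrix κ R i j) (swapSumMatrix κ ι R) := by
  classical
  exact Commute.sum_right _ _ _ fun t _ => commute_replaceMatrix_permMatrix R i j t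

end Words

section WeightedTrace

open MvPolynomial

/-- The Euler operator `X i * ∂/∂X i`. -/
noncomputable def euler {ι R : Type*} [CommRing R] (i : ι) :
    Derivation R (MvPolynomial ι R) (MvPolynomial ι R) :=
  (X i : MvPolynomial ι R) • pderiv i

theorem euler_monomial {ι R : Type*} [CommRing R] (i : ι) (m : ι →₀ ℕ) (c : R) :
    euler i (monomial m c) = monomial m ((m i : R) * c) := by
  rw [euler, Derivation.smul_apply, smul_eq_mul, X_mul_pderiv_monomial, ← map_nsmul, nsmul_eq_mul]

variable {κ ι R : Type*} [Fintype κ] [Fintype ι] [CommRing R]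

/-- The trace of a matrix on `V^⊗κ` composed with the diagonal action of the torus element with
eigenvalues `X i`; on a permutation of positions it is a product of power sums. -/
noncomputable def weightedTrace [DecidableEq κ] :
    Matrix (κ → ι) (κ → ι) R →ₗ[R] MvPolynomial ι R :=
  ∑ w, monomial (content w) ∘ₗ Matrix.entryLinearMap R R w w

theorem weightedTrace_apply [DecidableEq κ] (B : Matrix (κ → ι) (κ → ι) R) :
    weightedTrace B = ∑ w, monomial (content w) (B w w) := by
  simp [weightedTrace]

section DecidableEq

variable [DecidableEq κ] [DecidableEq ι]

theorem weightedTrace_one : weightedTrace (1 : Matrix (κ → ι) (κ → ι) R) =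
    (∑ i, X i) ^ Fintype.card κ := by
  rw [weightedTrace_apply, ← card_univ, ← prod_const, prod_univ_sum]
  simp only [Matrix.one_apply_eq, content, monomial_sum_one, Fintype.piFinset_univ]
  rfl

theorem euler_weightedTrace (i : ι) (B : Matrix (κ → ι) (κ → ι) R) :
    euler i (weightedTrace B) = weightedTrace (countMatrix κ R i * B) := by
  simp only [weightedTrace_apply, map_sum, euler_monomial, countMatrix, Matrix.diagonal_mul]

theorem X_mul_weightedTrace_replaceMatrix_mul (i j : ι) (B : Matrix (κ → ι) (κ → ι) R) :
    X j * weightedTrace (replaceMatrix κ R i j * B) =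
      X i * weightedTrace (B * replaceMatrix κ R i j) := by
  have htwist (w w' : κ → ι) : monomial (content w + Finsupp.single j 1)
      (replaceMatrix κ R i j w w' * B w' w) =
        monomial (content w' + Finsupp.single i 1) (B w' w * replaceMatrix κ R i j w w') := by
    simp only [replaceMatrix, mul_comm _ (B w' w), mul_sum, map_sum]
    refine sum_congr rfl fun k _ => ?_
    split_ifs with h
    · rw [h.2, ← h.1, content_update]
    · simp
  simp only [weightedTrace_apply, Matrix.mul_apply, mul_sum, map_sum, X, monomial_mul, one_mul,
    add_comm (Finsupp.single _ 1) (content _), htwist]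
  exact sum_comm

theorem sub_mul_weightedTrace_replaceMatrix_mul {B : Matrix (κ → ι) (κ → ι) R} {i j : ι}
    (hB : Commute (replaceMatrix κ R i j) B) :
    (X i - X j) * weightedTrace (replaceMatrix κ R i j * replaceMatrix κ R j i * B) =
      X i * (euler i (weightedTrace B) - euler j (weightedTrace B)) := by
  have htwist : X j * weightedTrace (replaceMatrix κ R i j * replaceMatrix κ R j i * B) =
      X i * weightedTrace (replaceMatrix κ R j i * replaceMatrix κ R i j * B) := by
    rw [mul_assoc, X_mul_weightedTrace_replaceMatrix_mul, mul_assoc, mul_assoc, hB.eq]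
  have hcommutator : replaceMatrix κ R i j * replaceMatrix κ R j i -
      replaceMatrix κ R j i * replaceMatrix κ R i j = countMatrix κ R i - countMatrix κ R j := by
    rw [replaceMatrix_mul_replaceMatrix, replaceMatrix_mul_replaceMatrix, exchangeMatrix_comm,
      add_sub_add_left_eq_sub]
  rw [sub_mul, htwist, ← mul_sub, ← map_sub, ← sub_mul, hcommutator, sub_mul, map_sub,
    euler_weightedTrace, euler_weightedTrace]

theorem weightedTrace_replaceMatrix_self_mul (i : ι) (B : Matrix (κ → ι) (κ → ι) R) :
    weightedTrace (replaceMatrix κ R i i * replaceMatrix κ R i i * B) =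
      euler i (euler i (weightedTrace B)) := by
  rw [replaceMatrix_self, euler_weightedTrace, euler_weightedTrace, mul_assoc]

theorem sum_weightedTrace_replaceMatrix_mul (B : Matrix (κ → ι) (κ → ι) R) :
    ∑ i, ∑ j, weightedTrace (replaceMatrix κ R i j * replaceMatrix κ R j i * B) =
      2 • weightedTrace (swapSumMatrix κ ι R * B) +
        (Fintype.card ι * Fintype.card κ : R) • weightedTrace B := by
  simp only [replaceMatrix_mul_replaceMatrix, ← map_sum, ← sum_mul, sum_add_distrib,
    sum_exchangeMatrix, sum_const, card_univ, ← smul_sum, sum_countMatrix, add_mul, map_add,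
    smul_mul_assoc, one_mul, map_nsmul, map_smul]
  rw [mul_smul, Nat.cast_smul_eq_nsmul R (Fintype.card ι)]

open scoped Classical in
theorem swapSumMatrix_pow (r : ℕ) : swapSumMatrix κ ι R ^ r =
    ∑ τ : Fin r → Perm κ with ∀ i, (τ i).IsSwap, permMatrix ι R (List.ofFn τ).prod := by
  induction r with
  | zero =>
    ext w w'
    simp [permMatrix, Matrix.one_apply, eq_comm]
  | succ r ih =>
    rw [pow_succ', ih, swapSumMatrix, sum_mul_sum, ← sum_product']
    refine sum_nbij' (fun p => Fin.cons p.1 p.2) (fun τ => (τ 0, Fin.tail τ)) ?_ ?_ ?_ ?_ ?_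
    · simp [Fin.forall_fin_succ]
    · simp +contextual [Fin.tail]
    · simp
    · simp
    · simp [List.ofFn_succ, permMatrix_mul]

theorem swapSumMatrix_pow_apply_self {w : κ → ι} (hw : Function.Injective w) (r : ℕ) :
    (swapSumMatrix κ ι R ^ r) w w = factorizationCount (Fintype.card κ) r := by
  classical
  have hfixed (σ : Perm κ) : w = w ∘ σ ↔ σ = 1 := by
    refine ⟨fun h => Equiv.ext fun k => (hw (congrFun h k)).symm, ?_⟩
    rintro rfl
    rfl
  simp only [swapSumMatrix_pow, Matrix.sum_apply, permMatrix, hfixed, sum_boole, filter_filter,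
    ← orderedProd_eq_prod_ofFn]
  rw [← Fintype.card_subtype, ← Nat.card_eq_fintype_card]
  exact congrArg _ (card_factorizations.trans (by rw [Fintype.card_fin]))

theorem coeff_weightedTrace (m : ι →₀ ℕ) (B : Matrix (κ → ι) (κ → ι) R) :
    coeff m (weightedTrace B) = ∑ w with content w = m, B w w := by
  simp only [weightedTrace_apply, coeff_sum, coeff_monomial, sum_filter]

theorem coeff_content_weightedTrace_swapSumMatrix_pow {e : κ → ι} (he : Function.Injective e)
    (r : ℕ) : coeff (content e) (weightedTrace (swapSumMatrix κ ι R ^ r)) =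
      factorizationCount (Fintype.card κ) r *
        coeff (content e) ((∑ i, X i) ^ Fintype.card κ : MvPolynomial ι R) := by
  rw [← weightedTrace_one, coeff_weightedTrace, coeff_weightedTrace, mul_sum]
  refine sum_congr rfl fun w hw => ?_
  rw [swapSumMatrix_pow_apply_self (injective_of_content_eq he (mem_filter.1 hw).2),
    Matrix.one_apply_eq, mul_one]

end DecidableEq

theorem sum_euler_weightedTrace [DecidableEq κ] (B : Matrix (κ → ι) (κ → ι) R) :
    ∑ i, euler i (weightedTrace B) = (Fintype.card κ : R) • weightedTrace B := by
  classical
  simp only [euler_weightedTrace, ← map_sum, ← sum_mul, sum_countMatrix, smul_mul_assoc, one_mul,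
    map_smul]

theorem coeff_content_sum_X_pow_ne_zero [CharZero R] (e : κ → ι) :
    coeff (content e) ((∑ i, X i) ^ Fintype.card κ : MvPolynomial ι R) ≠ 0 := by
  classical
  simp only [← weightedTrace_one, coeff_weightedTrace, Matrix.one_apply_eq, sum_const,
    nsmul_eq_mul, mul_one, Nat.cast_ne_zero, card_ne_zero]
  exact ⟨e, by simp⟩

end WeightedTrace

section Alternants

open MvPolynomial

theorem derivation_prod {ι R A : Type*} [DecidableEq ι] [CommSemiring R] [CommSemiring A]
    [Algebra R A] (D : Derivation R A A) (s : Finset ι) (f : ι → A) :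
    D (∏ k ∈ s, f k) = ∑ k ∈ s, (∏ j ∈ s.erase k, f j) * D (f k) := by
  induction s using Finset.induction_on with
  | empty => simp
  | insert a s ha ih =>
    rw [prod_insert ha, D.leibniz, ih, sum_insert ha, erase_insert ha, add_comm, smul_eq_mul,
      smul_eq_mul, mul_sum]
    refine congrArg _ (sum_congr rfl fun k hk => ?_)
    rw [erase_insert_of_ne (ne_of_mem_of_not_mem hk ha).symm,
      prod_insert fun h => ha (mem_of_mem_erase h), mul_assoc]

theorem sum_sum_eq_sum_diag_add_sum_lt {ι M : Type*} [Fintype ι] [LinearOrder ι] [AddCommMonoid M]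
    (f : ι → ι → M) :
    ∑ i, ∑ j, f i j = ∑ i, f i i + ∑ p : ι × ι with p.1 < p.2, (f p.1 p.2 + f p.2 p.1) := by
  have hdiag : ∑ p : ι × ι with p.1 = p.2, f p.1 p.2 = ∑ i, f i i := by
    simp [sum_filter, Fintype.sum_prod_type]
  have hgt : ∑ p : ι × ι with p.2 < p.1, f p.1 p.2 = ∑ p : ι × ι with p.1 < p.2, f p.2 p.1 :=
    sum_equiv (Equiv.prodComm ι ι) (by simp) (by simp)
  rw [sum_add_distrib, ← hgt, ← hdiag, ← Fintype.sum_prod_type' f]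
  simp only [sum_filter, ← sum_add_distrib]
  refine sum_congr rfl fun p _ => ?_
  rcases lt_trichotomy p.1 p.2 with h | h | h
  · simp [h, h.ne, h.not_gt]
  · simp [h]
  · simp [h, h.ne', h.not_gt]

variable {N : ℕ} {R : Type*} [CommRing R]

/-- The Laplacian on the torus, in logarithmic coordinates. -/
noncomputable def laplacian : MvPolynomial (Fin N) R →ₗ[R] MvPolynomial (Fin N) R :=
  ∑ i, (euler i).toLinearMap ∘ₗ (euler i).toLinearMap

theorem laplacian_apply (f : MvPolynomial (Fin N) R) :
    laplacian f = ∑ i, euler i (euler i f) := by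
  simp [laplacian]

theorem laplacian_mul (f g : MvPolynomial (Fin N) R) :
    laplacian (f * g) =
      laplacian f * g + 2 * ∑ i, euler i f * euler i g + f * laplacian g := by
  simp only [laplacian_apply, mul_sum, sum_mul, ← sum_add_distrib, Derivation.leibniz,
    smul_eq_mul, map_add]
  refine sum_congr rfl fun i _ => by ring

variable (R) in
/-- The alternant with exponents `l`; the Vandermonde determinant is the case `l j = j`. -/
noncomputable def alternant (l : Fin N → ℕ) : MvPolynomial (Fin N) R :=
  (Matrix.of fun j i => X i ^ l j).det

theorem alternant_eq_sum (l : Fin N → ℕ) :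
    alternant R l = ∑ σ : Perm (Fin N), (σ.sign : ℤ) • ∏ i, X i ^ l (σ i) := by
  simp only [alternant, Matrix.det_apply, Matrix.of_apply, Units.smul_def]

theorem laplacian_prod_X_pow (l : Fin N → ℕ) :
    laplacian (∏ i, X i ^ l i : MvPolynomial (Fin N) R) =
      (∑ i, (l i : R) ^ 2) • ∏ i, X i ^ l i := by
  have hmonomial : (∏ i, X i ^ l i : MvPolynomial (Fin N) R) =
      monomial (Finsupp.equivFunOnFinite.symm l) 1 := by
    simp [monomial_eq, Finsupp.prod_fintype]
  simp [hmonomial, laplacian_apply, euler_monomial, ← map_sum, smul_monomial, pow_two]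

theorem laplacian_alternant (l : Fin N → ℕ) :
    laplacian (alternant R l) = (∑ i, (l i : R) ^ 2) • alternant R l := by
  simp only [alternant_eq_sum, map_sum, map_zsmul, laplacian_prod_X_pow, smul_sum,
    Equiv.sum_comp _ fun i => (l i : R) ^ 2]
  exact sum_congr rfl fun σ _ => smul_comm _ _ _

variable (N R) in
/-- The Vandermonde determinant. -/
noncomputable abbrev vandermonde : MvPolynomial (Fin N) R := alternant R (fun i => (i : ℕ))

theorem vandermonde_eq_prod :
    vandermonde N R = ∏ p : Fin N × Fin N with p.1 < p.2, (X p.2 - X p.1) := by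
  have htranspose : (Matrix.of fun j i : Fin N => (X i : MvPolynomial (Fin N) R) ^ (j : ℕ)) =
      (Matrix.vandermonde X).transpose := rfl
  rw [vandermonde, alternant, htranspose, Matrix.det_transpose, Matrix.det_vandermonde, prod_filter,
    ← univ_product_univ, prod_product]
  simp only [← prod_filter]
  congr! with i
  ext
  simp

/-- Logarithmic derivatives of the Vandermonde product, cleared of denominators. -/
theorem sum_euler_vandermonde_mul_euler (f : MvPolynomial (Fin N) R) :
    ∑ i, euler i (vandermonde N R) * euler i f =
      ∑ p : Fin N × Fin N with p.1 < p.2,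
        (∏ q ∈ erase {q : Fin N × Fin N | q.1 < q.2} p, (X q.2 - X q.1)) *
          (X p.2 * euler p.2 f - X p.1 * euler p.1 f) := by
  have heuler (i j : Fin N) :
      euler i (X j : MvPolynomial (Fin N) R) = if j = i then X j else 0 := by
    rw [X, euler_monomial, Finsupp.single_apply]
    split_ifs <;> simp
  simp only [vandermonde_eq_prod, derivation_prod, sum_mul]
  rw [sum_comm]
  simp [mul_assoc, ← mul_sum, heuler, sub_mul, sum_sub_distrib]

theorem vandermonde_ne_zero [IsDomain R] : vandermonde N R ≠ 0 := by
  rw [vandermonde_eq_prod, prod_ne_zero_iff]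
  intro p hp
  rw [sub_ne_zero, ne_eq, X_inj]
  exact (mem_filter.1 hp).2.ne'

/-- The cut-and-join equation: conjugating the sum of transpositions by the Vandermonde
determinant turns it into the Laplacian. -/
theorem two_nsmul_vandermonde_mul_weightedTrace {κ : Type*} [Fintype κ] [DecidableEq κ]
    {B : Matrix (κ → Fin N) (κ → Fin N) R} (hB : ∀ i j, Commute (replaceMatrix κ R i j) B) :
    2 • (vandermonde N R * weightedTrace (swapSumMatrix κ (Fin N) R * B)) =
      laplacian (vandermonde N R * weightedTrace B) -
        (∑ i : Fin N, (i : R) ^ 2 + (2 * N - 1) * Fintype.card κ) •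
          (vandermonde N R * weightedTrace B) := by
  have hpair (p : Fin N × Fin N) (hp : p.1 < p.2) : vandermonde N R * (
      weightedTrace (replaceMatrix κ R p.1 p.2 * replaceMatrix κ R p.2 p.1 * B) +
        weightedTrace (replaceMatrix κ R p.2 p.1 * replaceMatrix κ R p.1 p.2 * B)) =
      2 * ((∏ q ∈ erase {q : Fin N × Fin N | q.1 < q.2} p, (X q.2 - X q.1)) *
          (X p.2 * euler p.2 (weightedTrace B) - X p.1 * euler p.1 (weightedTrace B))) -
        vandermonde N R * (euler p.1 (weightedTrace B) + euler p.2 (weightedTrace B)) := by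
    rw [vandermonde_eq_prod, ← mul_prod_erase _ _ (mem_filter.2 ⟨mem_univ p, hp⟩)]
    linear_combination (∏ q ∈ erase {q : Fin N × Fin N | q.1 < q.2} p, (X q.2 - X q.1)) *
      (sub_mul_weightedTrace_replaceMatrix_mul (hB p.2 p.1) -
        sub_mul_weightedTrace_replaceMatrix_mul (hB p.1 p.2))
  have hsum := sum_weightedTrace_replaceMatrix_mul B
  have hpairs := sum_congr (s₁ := {p : Fin N × Fin N | p.1 < p.2}) rfl
    fun p hp => hpair p (mem_filter.1 hp).2
  have hdegree := sum_sum_eq_sum_diag_add_sum_lt fun i _ : Fin N => euler i (weightedTrace B)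
  rw [sum_sum_eq_sum_diag_add_sum_lt] at hsum
  simp only [weightedTrace_replaceMatrix_self_mul, ← laplacian_apply] at hsum
  simp only [sum_sub_distrib, ← mul_sum, ← sum_euler_vandermonde_mul_euler] at hpairs
  simp only [sum_const, card_univ, ← smul_sum, sum_euler_weightedTrace, Fintype.card_fin] at hdegree
  rw [laplacian_mul, laplacian_alternant]
  simp only [smul_eq_C_mul, nsmul_eq_mul, map_add, map_mul, map_sub, map_natCast, map_ofNat,
    map_one, Fintype.card_fin] at hsum hdegree ⊢
  linear_combination (-vandermonde N R) * hsum + hpairs + vandermonde N R * hdegree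

end Alternants

section Spectrum

open MvPolynomial

/-- The sum of the contents of the boxes of a row of length `l - i` ending at exponent `l`, up to
the term depending on `i` only. -/
def rowContent (N l : ℕ) : ℚ := l.choose 2 - (N - 1) * l

/-- The sum of the contents of the partition whose rows have lengths `m i` (in increasing order):
the eigenvalue of the sum of all transpositions on the corresponding Schur function. -/
def contentSum {N : ℕ} (m : Fin N → ℕ) : ℚ :=
  ∑ i : Fin N, (rowContent N (i + m i) - rowContent N i)

variable {N : ℕ}

theorem vandermonde_mul_sum_X_pow (d : ℕ) :
    vandermonde N ℚ * (∑ i, X i) ^ d =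
      ∑ m ∈ piAntidiag univ d, Nat.multinomial univ m • alternant ℚ fun i => i + m i := by
  simp only [alternant_eq_sum, sum_mul, smul_sum]
  rw [sum_comm]
  refine sum_congr rfl fun σ _ => ?_
  rw [smul_mul_assoc, ← Equiv.sum_comp σ.symm, sum_pow_eq_sum_piAntidiag, mul_sum, smul_sum]
  refine sum_congr rfl fun m _ => ?_
  rw [← Equiv.prod_comp σ.symm fun i => (X i : MvPolynomial (Fin N) ℚ) ^ (σ i : ℕ),
    ← Equiv.prod_comp σ.symm fun i => (X i : MvPolynomial (Fin N) ℚ) ^ (σ i + m (σ i) : ℕ)]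
  simp only [Equiv.apply_symm_apply, pow_add, prod_mul_distrib, nsmul_eq_mul]
  rw [← nsmul_eq_mul, ← nsmul_eq_mul, smul_comm, mul_smul_comm]

theorem laplacian_alternant_shift_sub {d : ℕ} {m : Fin N → ℕ} (hm : ∑ i, m i = d) :
    laplacian (alternant ℚ fun i => i + m i) -
        (∑ i : Fin N, (i : ℚ) ^ 2 + (2 * N - 1) * d) • alternant ℚ (fun i => i + m i) =
      2 • contentSum m • alternant ℚ fun i => i + m i := by
  rw [laplacian_alternant, ← sub_smul, ← Nat.cast_smul_eq_nsmul ℚ, smul_smul, ← hm]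
  congr 1
  simp only [contentSum, rowContent, Nat.cast_choose_two, mul_sum, Nat.cast_sum]
  rw [← sum_add_distrib, ← sum_sub_distrib]
  refine sum_congr rfl fun i _ => ?_
  push_cast
  ring

theorem vandermonde_mul_weightedTrace_swapSumMatrix_pow {κ : Type*} [Fintype κ] [DecidableEq κ]
    (r : ℕ) : vandermonde N ℚ * weightedTrace (swapSumMatrix κ (Fin N) ℚ ^ r) =
      ∑ m ∈ piAntidiag univ (Fintype.card κ),
        (contentSum m ^ r * Nat.multinomial univ m) • alternant ℚ fun i => i + m i := by
  induction r with
  | zero => simp [weightedTrace_one, vandermonde_mul_sum_X_pow, Nat.cast_smul_eq_nsmul]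
  | succ r ih =>
    have hcommute (i j : Fin N) :
        Commute (replaceMatrix κ ℚ i j) (swapSumMatrix κ (Fin N) ℚ ^ r) :=
      (commute_replaceMatrix_swapSumMatrix _ i j).pow_right r
    refine nsmul_right_injective two_ne_zero ?_
    simp only
    rw [pow_succ', two_nsmul_vandermonde_mul_weightedTrace hcommute, ih, map_sum, smul_sum,
      smul_sum, ← sum_sub_distrib]
    refine sum_congr rfl fun m hm => ?_
    rw [map_smul, smul_comm _ (_ * _ : ℚ), ← smul_sub,
      laplacian_alternant_shift_sub (mem_piAntidiag.1 hm).1, smul_comm, smul_smul, pow_succ]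
    congr 2
    ring

end Spectrum

section JacobiTrudi

open PowerSeries

variable {N : ℕ} {R S : Type*} [CommRing R] [CommRing S]

/-- The minor of the Toeplitz matrix of the coefficients of `H` on the first `N` columns and the
rows `l`. -/
noncomputable def toeplitzMinor (H : R⟦X⟧) (l : Fin N → ℕ) : R :=
  (Matrix.of fun j k : Fin N => coeff (l j) (X ^ (k : ℕ) * H)).det

theorem toeplitzMinor_eq_sum (H : R⟦X⟧) (l : Fin N → ℕ) : toeplitzMinor H l =
    ∑ σ : Perm (Fin N), (σ.sign : ℤ) • ∏ k, coeff (l (σ k)) (X ^ (k : ℕ) * H) := by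
  simp only [toeplitzMinor, Matrix.det_apply, Matrix.of_apply, Units.smul_def]

theorem map_toeplitzMinor (f : R →+* S) (H : R⟦X⟧) (l : Fin N → ℕ) :
    f (toeplitzMinor H l) = toeplitzMinor (map f H) l := by
  rw [toeplitzMinor, toeplitzMinor, RingHom.map_det]
  congr
  ext j k
  simp [coeff_X_pow_mul', apply_ite f]

theorem toeplitzMinor_val {H : R⟦X⟧} (hH : constantCoeff H = 1) :
    toeplitzMinor H (fun i : Fin N => (i : ℕ)) = 1 := by
  rw [toeplitzMinor, Matrix.det_of_isLowerTriangular]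
  · simp [coeff_X_pow_mul', hH]
  · intro j k hjk
    have hlt : j < k := hjk
    simp [coeff_X_pow_mul', hlt.not_ge]

theorem toeplitzMinor_rescale (H : R⟦X⟧) {l : Fin N → ℕ} {d : ℕ}
    (hl : ∑ i, l i = d + ∑ i : Fin N, (i : ℕ))
    (a : R) : toeplitzMinor (rescale a H) l = a ^ d * toeplitzMinor H l := by
  rw [toeplitzMinor_eq_sum, toeplitzMinor_eq_sum, mul_sum]
  refine sum_congr rfl fun σ _ => ?_
  rw [mul_smul_comm]
  congr 1
  by_cases hσ : ∀ k : Fin N, (k : ℕ) ≤ l (σ k)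
  · have hd : d = ∑ k, (l (σ k) - k) := by
      rw [sum_tsub_distrib _ fun k _ => hσ k, Equiv.sum_comp σ l, hl, Nat.add_sub_cancel]
    simp [coeff_X_pow_mul', hσ, prod_mul_distrib, prod_pow_eq_pow_sum, hd]
  · push Not at hσ
    obtain ⟨k, hk⟩ := hσ
    rw [prod_eq_zero (mem_univ k), prod_eq_zero (mem_univ k), mul_zero] <;>
      simp [coeff_X_pow_mul', hk.not_ge]

/-- The power series `1 / (1 - x X)`. -/
noncomputable def geometricSeries (x : R) : R⟦X⟧ := PowerSeries.mk fun n => x ^ n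

theorem coeff_geometricSeries (x : R) (n : ℕ) : coeff n (geometricSeries x) = x ^ n :=
  coeff_mk _ _

theorem constantCoeff_geometricSeries (x : R) : constantCoeff (geometricSeries x) = 1 := by
  simp [geometricSeries]

theorem geometricSeries_mul_one_sub (x : R) : geometricSeries x * (1 - C x * X) = 1 := by
  ext n
  rw [mul_sub, mul_one, map_sub, mul_left_comm, coeff_C_mul]
  cases n with
  | zero => simp [geometricSeries]
  | succ n => simp [coeff_geometricSeries, coeff_succ_mul_X, coeff_one, pow_succ']

theorem pow_eq_sum_coeff_mul (x : Fin N → R) (i : Fin N) (l : ℕ) :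
    x i ^ l = ∑ k : Fin N, coeff l (X ^ (k : ℕ) * ∏ j, geometricSeries (x j)) *
      (∏ j ∈ univ.erase i, (1 - Polynomial.C (x j) * Polynomial.X)).coeff k := by
  set E : Polynomial R := ∏ j ∈ univ.erase i, (1 - Polynomial.C (x j) * Polynomial.X)
  have hdegree : E.natDegree < N := by
    calc E.natDegree ≤ ∑ j ∈ univ.erase i, 1 :=
          (Polynomial.natDegree_prod_le _ _).trans (sum_le_sum fun j _ => by compute_degree)
      _ < N := by simpa using i.pos
  have hE : (E : R⟦X⟧) * ∏ j, geometricSeries (x j) = geometricSeries (x i) := by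
    rw [← mul_prod_erase _ _ (mem_univ i), mul_left_comm,
      ← Polynomial.coeToPowerSeries.ringHom_apply, map_prod, ← prod_mul_distrib, prod_eq_one,
      mul_one]
    intro j _
    rw [mul_comm, ← geometricSeries_mul_one_sub (x j)]
    simp
  have hsum : (E : R⟦X⟧) = ∑ k : Fin N, C (E.coeff k) * X ^ (k : ℕ) := by
    rw [Fin.sum_univ_eq_sum_range fun k => C (E.coeff k) * X ^ k]
    conv_lhs => rw [E.as_sum_range_C_mul_X_pow' hdegree]
    simp [← Polynomial.coeToPowerSeries.ringHom_apply]
    simp [Polynomial.coeToPowerSeries.ringHom_apply]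
  simp only [← coeff_geometricSeries, ← hE, hsum, sum_mul, map_sum, mul_assoc, coeff_C_mul,
    mul_comm (E.coeff _)]

/-- The Jacobi–Trudi identity. -/
theorem det_pow_eq_mul_toeplitzMinor (x : Fin N → R) (l : Fin N → ℕ) :
    (Matrix.of fun j i => x i ^ l j).det =
      (Matrix.of fun j i : Fin N => x i ^ (j : ℕ)).det *
        toeplitzMinor (∏ i, geometricSeries (x i)) l := by
  set H := ∏ i, geometricSeries (x i)
  let c : Matrix (Fin N) (Fin N) R := Matrix.of fun k i =>
    (∏ j ∈ univ.erase i, (1 - Polynomial.C (x j) * Polynomial.X)).coeff k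
  have hfactor (l : Fin N → ℕ) :
      (Matrix.of fun j i => x i ^ l j).det = toeplitzMinor H l * c.det := by
    rw [toeplitzMinor, ← Matrix.det_mul]
    exact congrArg _ (Matrix.ext fun j i => pow_eq_sum_coeff_mul x i (l j))
  have hH : constantCoeff H = 1 := by simp [H, map_prod, constantCoeff_geometricSeries]
  rw [hfactor, hfactor fun j => j, toeplitzMinor_val hH, one_mul, mul_comm]

theorem prod_rescale_exp [Algebra ℚ R] {ι : Type*} (s : Finset ι) (x : ι → R) :
    ∏ j ∈ s, rescale (x j) (exp R) = rescale (∑ j ∈ s, x j) (exp R) := by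
  classical
  induction s using Finset.induction_on with
  | empty => simp [rescale_zero]
  | insert a s ha ih => rw [prod_insert ha, sum_insert ha, ih, exp_mul_exp_eq_exp_add]

theorem map_geometricSeries (f : R →+* S) (x : R) :
    map f (geometricSeries x) = geometricSeries (f x) := by
  ext n
  simp [coeff_geometricSeries]

theorem geometricSeries_eq_rescale_exp [Algebra ℚ R] {x : R} (hx : x ^ 2 = 0) :
    geometricSeries x = rescale x (exp R) := by
  ext n
  match n with
  | 0 => simp [coeff_geometricSeries]
  | 1 => simp [coeff_geometricSeries]
  | n + 2 => simp [coeff_geometricSeries, pow_add, hx]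

/-- The ideal generated by the squares of the variables: it consists of the polynomials without
squarefree terms. -/
noncomputable def squareIdeal (ι : Type*) : Ideal (MvPolynomial ι ℚ) :=
  Ideal.span (Set.range fun i => MvPolynomial.X i ^ 2)

theorem coeff_content_eq_zero {κ ι : Type*} [Fintype κ] {e : κ → ι} (he : Function.Injective e)
    {f : MvPolynomial ι ℚ} (hf : f ∈ squareIdeal ι) :
    MvPolynomial.coeff (content e) f = 0 := by
  classical
  have hspan : squareIdeal ι = Ideal.span ((fun s => MvPolynomial.monomial s 1) ''
      Set.range fun i : ι => Finsupp.single i 2) := by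
    rw [squareIdeal, ← Set.range_comp]
    simp [Function.comp_def, MvPolynomial.X_pow_eq_monomial]
  rw [hspan, MvPolynomial.mem_ideal_span_monomial_image] at hf
  by_contra hcoeff
  obtain ⟨_, ⟨i, rfl⟩, hi⟩ := hf _ (MvPolynomial.mem_support_iff.2 hcoeff)
  have htwo : 2 ≤ #{k | e k = i} := by simpa [content_apply] using hi
  exact htwo.not_gt (Nat.lt_succ_of_le (card_le_one.2 fun a ha b hb =>
    he ((mem_filter.1 ha).2.trans (mem_filter.1 hb).2.symm)))

theorem coeff_content_toeplitzMinor {κ : Type*} [Fintype κ] {e : κ → Fin N}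
    (he : Function.Injective e) {d : ℕ} {l : Fin N → ℕ}
    (hl : ∑ i, l i = d + ∑ i : Fin N, (i : ℕ)) :
    MvPolynomial.coeff (content e) (toeplitzMinor (∏ i, geometricSeries (MvPolynomial.X i)) l) =
      toeplitzMinor (exp ℚ) l *
        MvPolynomial.coeff (content e) ((∑ i, MvPolynomial.X i) ^ d : MvPolynomial (Fin N) ℚ) := by
  let π := Ideal.Quotient.mk (squareIdeal (Fin N))
  have hsquare (i : Fin N) : π (MvPolynomial.X i) ^ 2 = 0 := by
    rw [← map_pow, Ideal.Quotient.eq_zero_iff_mem]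
    exact Ideal.subset_span ⟨i, rfl⟩
  have hmod : π (toeplitzMinor (∏ i, geometricSeries (MvPolynomial.X i)) l) =
      π (MvPolynomial.C (toeplitzMinor (exp ℚ) l) * (∑ i, MvPolynomial.X i) ^ d) := by
    simp only [map_toeplitzMinor, map_prod, map_geometricSeries,
      geometricSeries_eq_rescale_exp (hsquare _), prod_rescale_exp, toeplitzMinor_rescale _ hl,
      map_mul, map_pow, map_sum, map_exp]
    rw [mul_comm]
  rw [← MvPolynomial.coeff_C_mul, ← sub_eq_zero, ← MvPolynomial.coeff_sub]
  exact coeff_content_eq_zero he (Ideal.Quotient.eq.1 hmod)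

/-- Frobenius' formula, with the sum over partitions unfolded into a sum over compositions. -/
theorem factorizationCount_eq_sum {d : ℕ} (hd : d ≤ N) (r : ℕ) :
    (factorizationCount d r : ℚ) = ∑ m ∈ piAntidiag (univ : Finset (Fin N)) d,
      contentSum m ^ r * Nat.multinomial univ m * toeplitzMinor (exp ℚ) fun i => i + m i := by
  have he := Fin.castLE_injective hd
  have hspectrum : weightedTrace (swapSumMatrix (Fin d) (Fin N) ℚ ^ r) =
      ∑ m ∈ piAntidiag (univ : Finset (Fin N)) d, (contentSum m ^ r * Nat.multinomial univ m) •
        toeplitzMinor (∏ i, geometricSeries (MvPolynomial.X i)) fun i => i + m i := by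
    refine mul_left_cancel₀ (vandermonde_ne_zero (N := N) (R := ℚ)) ?_
    rw [vandermonde_mul_weightedTrace_swapSumMatrix_pow, mul_sum, Fintype.card_fin]
    refine sum_congr rfl fun m _ => ?_
    rw [alternant, det_pow_eq_mul_toeplitzMinor, mul_smul_comm]
    rfl
  have hcoeff := congrArg (MvPolynomial.coeff (content (Fin.castLE hd))) hspectrum
  rw [coeff_content_weightedTrace_swapSumMatrix_pow he,
    MvPolynomial.coeff_sum, Fintype.card_fin] at hcoeff
  refine mul_right_cancel₀ (coeff_content_sum_X_pow_ne_zero (R := ℚ) (Fin.castLE hd)) ?_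
  rw [Fintype.card_fin, hcoeff, sum_mul]
  refine sum_congr rfl fun m hm => ?_
  have hl : ∑ i : Fin N, (i + m i) = d + ∑ i : Fin N, (i : ℕ) := by
    rw [sum_add_distrib, (mem_piAntidiag.1 hm).1, add_comm]
  rw [MvPolynomial.coeff_smul, coeff_content_toeplitzMinor he hl,
    smul_eq_mul, ← mul_assoc]

end JacobiTrudi

section Hankel

variable {R A : Type*} [CommRing R] [CommRing A] {n : ℕ}

theorem det_fromBlocks_mul_det_pow {m l : Type*} [Fintype m] [Fintype l] [DecidableEq m]
    [DecidableEq l] (P : Matrix m m A) (B : Matrix m l A) (C : Matrix l m A) (D : Matrix l l A) :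
    (Matrix.fromBlocks P B C D).det * P.det ^ Fintype.card l =
      P.det * (P.det • D - C * P.adjugate * B).det := by
  have hfactor : Matrix.fromBlocks P B C D *
      Matrix.fromBlocks 1 (-(P.adjugate * B)) 0 (P.det • (1 : Matrix l l A)) =
      Matrix.fromBlocks P 0 C (P.det • D - C * P.adjugate * B) := by
    simp [Matrix.fromBlocks_multiply, ← Matrix.mul_assoc, Matrix.mul_adjugate, sub_eq_neg_add]
  rw [← Matrix.det_fromBlocks_zero₁₂, ← hfactor, Matrix.det_mul, Matrix.det_fromBlocks_zero₂₁,
    Matrix.det_one, Matrix.det_smul, Matrix.det_one, one_mul, mul_one]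

theorem det_fromBlocks_mul_det_eq_det [IsDomain A] {m l : Type*} [Fintype m] [Fintype l]
    [DecidableEq m] [DecidableEq l] {P : Matrix m m A} (hP : P.det ≠ 0)
    (B : Matrix m l A) (C : Matrix l m A) (D : Matrix l l A) :
    (Matrix.fromBlocks P B C D).det * P.det ^ Fintype.card l = P.det *
      (Matrix.of fun i j => (Matrix.fromBlocks P (B.submatrix id fun _ : Fin 1 => j)
        (C.submatrix (fun _ : Fin 1 => i) id) (D.submatrix (fun _ => i) fun _ => j)).det).det := by
  rw [det_fromBlocks_mul_det_pow]
  congr 2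
  ext i j
  have hbordered := det_fromBlocks_mul_det_pow P (B.submatrix id fun _ : Fin 1 => j)
    (C.submatrix (fun _ : Fin 1 => i) id) (D.submatrix (fun _ => i) fun _ => j)
  rw [Fintype.card_fin, pow_one, mul_comm] at hbordered
  rw [Matrix.of_apply, mul_left_cancel₀ hP hbordered, Matrix.det_fin_one]
  simp [Matrix.mul_apply]

/-- The Desnanot–Jacobi identity. -/
theorem det_mul_det_castAdd [IsDomain A] (M : Matrix (Fin (n + 2)) (Fin (n + 2)) A)
    (hM : (M.submatrix (Fin.castAdd 2) (Fin.castAdd 2)).det ≠ 0) :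
    M.det * (M.submatrix (Fin.castAdd 2) (Fin.castAdd 2)).det =
      (M.submatrix (Fin.last n).castSucc.succAbove (Fin.last n).castSucc.succAbove).det *
          (M.submatrix Fin.castSucc Fin.castSucc).det -
        (M.submatrix Fin.castSucc (Fin.last n).castSucc.succAbove).det *
          (M.submatrix (Fin.last n).castSucc.succAbove Fin.castSucc).det := by
  let r (i : Fin 2) : Fin (n + 1) → Fin (n + 2) := (Fin.natAdd n i.rev).succAbove
  have hr (i : Fin 2) : r i ∘ (finSumFinEquiv : Fin n ⊕ Fin 1 ≃ Fin (n + 1)) =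
      Sum.elim (Fin.castAdd 2) fun _ => Fin.natAdd n i := by
    ext (k | k)
    · exact congrArg _ (Fin.succAbove_of_castSucc_lt _ k.castSucc (by simp [Fin.lt_def]; omega))
    · obtain rfl := Subsingleton.elim k 0
      fin_cases i
      · exact congrArg _ (Fin.succAbove_last_apply (Fin.last n))
      · exact congrArg _ (Fin.succAbove_castSucc_self (Fin.last n))
  have hblocks : Matrix.fromBlocks (M.submatrix (Fin.castAdd 2) (Fin.castAdd 2))
      (M.submatrix (Fin.castAdd 2) (Fin.natAdd n)) (M.submatrix (Fin.natAdd n) (Fin.castAdd 2))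
      (M.submatrix (Fin.natAdd n) (Fin.natAdd n)) =
      M.submatrix finSumFinEquiv finSumFinEquiv := by
    ext (_ | _) (_ | _) <;> rfl
  have hbordered (i j : Fin 2) :
      (Matrix.fromBlocks (M.submatrix (Fin.castAdd 2) (Fin.castAdd 2))
      (M.submatrix (Fin.castAdd 2) fun _ : Fin 1 => Fin.natAdd n j)
      (M.submatrix (fun _ : Fin 1 => Fin.natAdd n i) (Fin.castAdd 2))
      (M.submatrix (fun _ => Fin.natAdd n i) fun _ => Fin.natAdd n j)).det =
      (M.submatrix (r i) (r j)).det := by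
    rw [← Matrix.det_submatrix_equiv_self finSumFinEquiv (M.submatrix (r i) (r j)),
      Matrix.submatrix_submatrix, hr, hr]
    congr
    ext (_ | _) (_ | _) <;> rfl
  have h := det_fromBlocks_mul_det_eq_det hM (M.submatrix (Fin.castAdd 2) (Fin.natAdd n))
    (M.submatrix (Fin.natAdd n) (Fin.castAdd 2)) (M.submatrix (Fin.natAdd n) (Fin.natAdd n))
  simp only [Matrix.submatrix_submatrix, Function.comp_def, id_def, hbordered, hblocks,
    Matrix.det_submatrix_equiv_self, Matrix.det_fin_two, Matrix.of_apply, Fintype.card_fin] at h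
  rw [sq, ← mul_assoc, mul_comm] at h
  have h := mul_left_cancel₀ hM h
  have h0 : r 0 = Fin.castSucc := Fin.succAbove_last
  have h1 : r 1 = (Fin.last n).castSucc.succAbove := rfl
  rw [h, h0, h1, mul_comm (Matrix.det _) (M.submatrix Fin.castSucc Fin.castSucc).det]

theorem derivation_det {m : Type*} [Fintype m] [DecidableEq m] [Algebra R A]
    (D : Derivation R A A) (M : Matrix m m A) :
    D M.det = ∑ k, (M.updateCol k fun i => D (M i k)).det := by
  simp only [Matrix.det_apply, map_sum, Units.smul_def, map_zsmul, derivation_prod]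
  rw [sum_comm]
  refine sum_congr rfl fun σ _ => ?_
  rw [← smul_sum]
  refine congrArg _ (sum_congr rfl fun k _ => ?_)
  rw [← mul_prod_erase _ _ (mem_univ k), Matrix.updateCol_self, mul_comm]
  exact congrArg _ (prod_congr rfl fun j hj => (Matrix.updateCol_ne (ne_of_mem_erase hj)).symm)

theorem derivation_det_iterate [Algebra R A] (D : Derivation R A A) (u : Fin (n + 1) → A) :
    D (Matrix.of fun i j : Fin (n + 1) => D^[j] (u i)).det =
      (Matrix.of fun i j : Fin (n + 1) => D^[(Fin.last n).castSucc.succAbove j] (u i)).det := by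
  rw [derivation_det, Fin.sum_univ_castSucc, sum_eq_zero, zero_add]
  · congr 1
    ext i j
    cases j using Fin.lastCases with
    | last => simp [Function.iterate_succ_apply']
    | cast j =>
      rw [Matrix.updateCol_ne (Fin.castSucc_ne_last j), Matrix.of_apply, Matrix.of_apply,
        Fin.succAbove_of_castSucc_lt _ _ (by simp [Fin.lt_def])]
      rfl
  · intro k _
    refine Matrix.det_zero_of_column_eq k.castSucc_lt_succ.ne fun i => ?_
    rw [Matrix.updateCol_self, Matrix.updateCol_ne k.castSucc_lt_succ.ne', Matrix.of_apply,
      Matrix.of_apply, Fin.val_succ, Function.iterate_succ_apply', Fin.val_castSucc]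

/-- The Hankel determinant of the derivatives of `f`, which is the Wronskian of the first `n`
iterated derivatives of `f`. -/
def hankelDet (D : A → A) (f : A) (n : ℕ) : A :=
  (Matrix.of fun i j : Fin n => D^[i + j] f).det

/-- The Toda equation. -/
theorem hankelDet_mul_hankelDet [IsDomain A] {_ : Algebra R A} (D : Derivation R A A) {f : A}
    (hf : hankelDet D f n ≠ 0) :
    hankelDet D f (n + 2) * hankelDet D f n =
      hankelDet D f (n + 1) * D (D (hankelDet D f (n + 1))) - D (hankelDet D f (n + 1)) ^ 2 := by
  set s := (Fin.last n).castSucc.succAbove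
  set M := Matrix.of fun i j : Fin (n + 2) => D^[i + j] f
  have hiterate (a b : Fin (n + 1) → ℕ) : (Matrix.of fun i j => D^[a i + b j] f) =
      Matrix.of fun i j => D^[b j] (D^[a i] f) := by
    simp only [add_comm (a _), Function.iterate_add_apply]
  have hright : (M.submatrix Fin.castSucc s).det = D (hankelDet D f (n + 1)) := by
    rw [hankelDet, hiterate (fun i => i) fun j => j, derivation_det_iterate, ← hiterate]
    rfl
  have hleft : (M.submatrix s Fin.castSucc).det = D (hankelDet D f (n + 1)) := by
    rw [← hright, ← Matrix.det_transpose]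
    congr 1
    ext i j
    simp [M, add_comm]
  have hboth : (M.submatrix s s).det = D (D (hankelDet D f (n + 1))) := by
    rw [← hleft]
    change _ = D (Matrix.of fun i j : Fin (n + 1) => D^[(s i : ℕ) + j] f).det
    rw [hiterate, derivation_det_iterate, ← hiterate]
    rfl
  have h := det_mul_det_castAdd M hf
  rw [hright, hleft, hboth] at h
  rw [sq, mul_comm (hankelDet D f (n + 1))]
  exact h

end Hankel

section Toda

open PowerSeries

section CommRing

variable {R : Type*} [CommRing R]

/-- The derivation `X d/dX`. -/
noncomputable def eulerDerivation (R : Type*) [CommRing R] : Derivation R R⟦X⟧ R⟦X⟧ :=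
  (X : R⟦X⟧) • PowerSeries.derivative R

theorem coeff_eulerDerivation (f : R⟦X⟧) (n : ℕ) :
    coeff n (eulerDerivation R f) = n * coeff n f := by
  rw [eulerDerivation, Derivation.smul_apply, smul_eq_mul]
  cases n with
  | zero => simp
  | succ n => rw [coeff_succ_X_mul, coeff_derivative, mul_comm, Nat.cast_succ]

theorem coeff_eulerDerivation_iterate (f : R⟦X⟧) (k n : ℕ) :
    coeff n ((eulerDerivation R)^[k] f) = n ^ k * coeff n f := by
  induction k with
  | zero => simp
  | succ k ih => rw [Function.iterate_succ_apply', coeff_eulerDerivation, ih, pow_succ', mul_assoc]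

theorem eulerDerivation_X_pow (n : ℕ) :
    eulerDerivation R (X ^ n) = (n : R⟦X⟧) * X ^ n := by
  ext m
  rw [coeff_eulerDerivation, ← nsmul_eq_mul _ (X ^ n : R⟦X⟧), map_nsmul, nsmul_eq_mul, coeff_X_pow]
  split_ifs with h <;> simp [h]

theorem eulerDerivation_mul (f g : R⟦X⟧) :
    eulerDerivation R (f * g) = f * eulerDerivation R g + g * eulerDerivation R f :=
  (eulerDerivation R).leibniz f g

/-- The left side is `f ^ 2` times the second logarithmic derivative of `f`, which only sees the
degree of a monomial factor through its derivative, a constant. -/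
theorem mul_eulerDerivation_sub_sq_of_monomial_mul (c : R) (n : ℕ) (f : R⟦X⟧) :
    (C c * X ^ n * f) * eulerDerivation R (eulerDerivation R (C c * X ^ n * f)) -
        eulerDerivation R (C c * X ^ n * f) ^ 2 =
      (C c * X ^ n) ^ 2 *
        (f * eulerDerivation R (eulerDerivation R f) - eulerDerivation R f ^ 2) := by
  have hmonomial : eulerDerivation R (C c * X ^ n) = (n : R⟦X⟧) * (C c * X ^ n) := by
    rw [← smul_eq_C_mul, Derivation.map_smul, eulerDerivation_X_pow, mul_smul_comm]
  simp only [eulerDerivation_mul, hmonomial, map_add, Derivation.map_natCast]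
  ring

theorem eulerDerivation_rescale (a : R) (f : R⟦X⟧) :
    eulerDerivation R (rescale a f) = rescale a (eulerDerivation R f) := by
  ext n
  simp only [coeff_eulerDerivation, coeff_rescale, mul_left_comm]

theorem coeff_prod_eq_sum_piAntidiag {ι : Type*} [Fintype ι] [DecidableEq ι] (f : ι → R⟦X⟧)
    (d : ℕ) : coeff d (∏ i, f i) = ∑ m ∈ piAntidiag univ d, ∏ i, coeff (m i) (f i) := by
  rw [coeff_prod]
  exact sum_nbij' (⇑) Finsupp.equivFunOnFinite.symm (by simp) (by simp) (by simp) (by simp)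
    (by simp)

theorem coeff_det {ι : Type*} [Fintype ι] [DecidableEq ι] (M : Matrix ι ι R⟦X⟧) (d : ℕ) :
    coeff d M.det =
      ∑ m ∈ piAntidiag univ d, (Matrix.of fun i j => coeff (m i) (M i j)).det := by
  rw [← Matrix.det_transpose, Matrix.det_apply, map_sum]
  simp only [fun m : ι → ℕ => (Matrix.det_transpose (.of fun i j => coeff (m i) (M i j))).symm,
    Matrix.det_apply _, Units.smul_def, map_zsmul, coeff_prod_eq_sum_piAntidiag, smul_sum]
  exact sum_comm

theorem hankelDet_eulerDerivation (f : R⟦X⟧) (n : ℕ) :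
    hankelDet (eulerDerivation R) f n =
      (Matrix.of fun i j : Fin n => PowerSeries.mk fun l =>
        (l.descFactorial i * l.descFactorial j : R) * coeff l f).det := by
  set P : Matrix (Fin n) (Fin n) R⟦X⟧ :=
    (Int.castRingHom R⟦X⟧).mapMatrix (.of fun i j : Fin n => (descPochhammer ℤ j).coeff i)
  have hP : P.det = 1 := by
    rw [← RingHom.map_det, Matrix.det_matrixOfPolynomials, map_one]
    · exact fun i => descPochhammer_natDegree ℤ i
    · exact fun i => monic_descPochhammer ℤ i
  have hdesc (l : ℕ) (j : Fin n) :
      (l.descFactorial j : R) = ∑ b : Fin n, ((descPochhammer ℤ j).coeff b : R) * l ^ (b : ℕ) := by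
    have h := descPochhammer_eval_eq_descFactorial ℤ l j
    rw [Polynomial.eval_eq_sum_range' (n := n) (by simp [descPochhammer_natDegree]),
      ← Fin.sum_univ_eq_sum_range fun b => (descPochhammer ℤ j).coeff b * (l : ℤ) ^ b] at h
    exact_mod_cast congrArg (Int.cast (R := R)) h.symm
  rw [hankelDet, ← one_mul (Matrix.det _), ← mul_one (_ * _), ← hP]
  nth_rw 1 [← Matrix.det_transpose]
  rw [← Matrix.det_mul, ← Matrix.det_mul]
  congr 1
  ext i j l
  have hentry : (P.transpose * Matrix.of (fun i j : Fin n => (eulerDerivation R)^[i + j] f) * P) i j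
      = ∑ b : Fin n, ∑ a : Fin n, ((descPochhammer ℤ i).coeff a * (descPochhammer ℤ j).coeff b) •
        (eulerDerivation R)^[a + b] f := by
    simp only [Matrix.mul_apply, sum_mul]
    refine sum_congr rfl fun b _ => sum_congr rfl fun a _ => ?_
    simp [P, mul_right_comm]
  rw [hentry, Matrix.of_apply, coeff_mk, hdesc, hdesc, sum_mul_sum, sum_mul, sum_comm]
  simp only [map_sum, sum_mul]
  refine sum_congr rfl fun a _ => sum_congr rfl fun b _ => ?_
  rw [map_zsmul, coeff_eulerDerivation_iterate, zsmul_eq_mul]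
  push_cast
  ring

theorem coeff_X_pow_mul_exp (i l : ℕ) :
    coeff l (X ^ i * exp ℚ) = (l.descFactorial i / l.factorial : ℚ) := by
  rw [coeff_X_pow_mul']
  split_ifs with h
  · rw [coeff_exp, ← Nat.factorial_mul_descFactorial h]
    have : (l.descFactorial i : ℚ) ≠ 0 := by simpa using h
    push_cast
    field_simp
  · simp [Nat.descFactorial_of_lt (not_le.1 h)]

variable [Algebra ℚ R] (w : ℕ → R) (n : ℕ)

theorem hankelDet_eulerDerivation_eq_X_pow_mul_det :
    hankelDet (eulerDerivation R) (PowerSeries.mk fun l => ((l.factorial : ℚ)⁻¹ ^ 2) • w l) n =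
      X ^ (∑ i : Fin n, (i : ℕ)) * (Matrix.of fun i j : Fin n => PowerSeries.mk fun k =>
        ((k.factorial : ℚ)⁻¹ • w (i + k)) *
          algebraMap ℚ R (coeff (i + k) (X ^ (j : ℕ) * exp ℚ))).det := by
  rw [hankelDet_eulerDerivation, ← prod_pow_eq_pow_sum, ← Matrix.det_mul_column]
  congr 1
  ext i j l
  rw [Matrix.of_apply, Matrix.of_apply, Matrix.of_apply, coeff_X_pow_mul', coeff_mk, coeff_mk]
  split_ifs with h
  · obtain ⟨k, rfl⟩ := Nat.exists_eq_add_of_le h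
    have hfactorial :
        (k.factorial : ℚ)⁻¹ = (i + k).descFactorial i * ((i + k).factorial : ℚ)⁻¹ := by
      rw [← div_eq_mul_inv, ← coeff_X_pow_mul_exp, add_comm, coeff_X_pow_mul, coeff_exp]
      simp
    rw [Nat.add_sub_cancel_left, coeff_mk, coeff_X_pow_mul_exp, hfactorial, div_eq_mul_inv]
    simp only [Algebra.smul_def, map_mul, map_pow, map_natCast]
    ring
  · simp [Nat.descFactorial_of_lt (not_le.1 h)]

theorem hankelDet_eulerDerivation_eq_X_pow_mul :
    hankelDet (eulerDerivation R) (PowerSeries.mk fun l => ((l.factorial : ℚ)⁻¹ ^ 2) • w l) n =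
      X ^ (∑ i : Fin n, (i : ℕ)) * PowerSeries.mk fun d =>
        ∑ m ∈ piAntidiag (univ : Finset (Fin n)) d,
          ((∏ i, ((m i).factorial : ℚ)⁻¹) * toeplitzMinor (exp ℚ) fun i => i + m i) •
            ∏ i : Fin n, w (i + m i) := by
  rw [hankelDet_eulerDerivation_eq_X_pow_mul_det]
  congr 1
  ext d
  rw [coeff_det, coeff_mk]
  refine sum_congr rfl fun m _ => ?_
  rw [toeplitzMinor, mul_comm, mul_smul, ← prod_smul, Algebra.smul_def, RingHom.map_det,
    mul_comm, ← Matrix.det_mul_column]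
  congr 1
  ext i j
  simp

end CommRing

/-- The generating series of all factorizations of the identity of `S_d` into `r` transpositions,
exponential in `d`, the exponent of the outer variable, and in `r`, that of the inner one. -/
noncomputable def factorizationSeries : ℚ⟦X⟧⟦X⟧ :=
  PowerSeries.mk fun d => PowerSeries.mk fun r =>
    (factorizationCount d r / (d.factorial * r.factorial) : ℚ)

/-- The contribution to `factorizationSeries` of the partitions with at most `n` rows, with the sum
over partitions unfolded into a sum over compositions. -/
noncomputable def rowBoundedSeries (n : ℕ) : ℚ⟦X⟧⟦X⟧ :=
  PowerSeries.mk fun d => ∑ m ∈ piAntidiag (univ : Finset (Fin n)) d,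
    ((∏ i, ((m i).factorial : ℚ)⁻¹) * toeplitzMinor (exp ℚ) fun i => i + m i) •
      rescale (contentSum m) (exp ℚ)

theorem coeff_rowBoundedSeries {d n : ℕ} (h : d ≤ n) :
    coeff d (rowBoundedSeries n) = coeff d factorizationSeries := by
  ext r
  simp only [rowBoundedSeries, factorizationSeries, coeff_mk, map_sum, coeff_smul, coeff_rescale,
    coeff_exp, factorizationCount_eq_sum h r, sum_div]
  refine sum_congr rfl fun m hm => ?_
  have hmultinomial : (Nat.multinomial univ m : ℚ) =
      d.factorial * ∏ i, ((m i).factorial : ℚ)⁻¹ := by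
    have hspec := Nat.multinomial_spec univ m
    rw [(mem_piAntidiag.1 hm).1] at hspec
    rw [← hspec, prod_inv_distrib]
    have : ∏ i, ((m i).factorial : ℚ) ≠ 0 := by positivity
    push_cast
    field_simp
  rw [hmultinomial]
  have : (d.factorial : ℚ) ≠ 0 := by positivity
  simp
  field_simp

theorem hankelDet_rescale_rowContent (N n : ℕ) :
    hankelDet (eulerDerivation ℚ⟦X⟧)
        (PowerSeries.mk fun l => ((l.factorial : ℚ)⁻¹ ^ 2) • rescale (rowContent N l) (exp ℚ)) n =
      C (rescale (∑ i : Fin n, rowContent N i) (exp ℚ)) * X ^ (∑ i : Fin n, (i : ℕ)) *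
        rescale (rescale (n - N : ℚ) (exp ℚ)) (rowBoundedSeries n) := by
  rw [hankelDet_eulerDerivation_eq_X_pow_mul, mul_comm (C _), mul_assoc]
  congr 1
  ext1 d
  rw [coeff_C_mul, coeff_rescale, rowBoundedSeries, coeff_mk, coeff_mk, mul_sum, mul_sum]
  refine sum_congr rfl fun m hm => ?_
  rw [prod_rescale_exp, mul_smul_comm, mul_smul_comm, ← map_pow, exp_pow_eq_rescale_exp,
    rescale_rescale, exp_mul_exp_eq_exp_add, exp_mul_exp_eq_exp_add]
  congr 3
  rw [contentSum, ← (mem_piAntidiag.1 hm).1, Nat.cast_sum, sum_mul, ← sum_add_distrib,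
    ← sum_add_distrib]
  refine sum_congr rfl fun i _ => ?_
  simp only [rowContent]
  push_cast
  ring

theorem coeff_zero_factorizationSeries_ne_zero : coeff 0 factorizationSeries ≠ 0 := by
  intro h
  have h0 : factorizationCount 0 0 = 0 := by
    simpa [factorizationSeries] using congrArg (coeff 0) h
  have h1 := factorizationCount_eq_sum le_rfl 0 (d := 0)
  simp [h0, toeplitzMinor] at h1

theorem rescale_rowBoundedSeries_ne_zero (a : ℚ⟦X⟧) (n : ℕ) :
    rescale a (rowBoundedSeries n) ≠ 0 := by
  intro h
  have h0 := congrArg (coeff 0) h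
  rw [coeff_rescale, coeff_rowBoundedSeries n.zero_le, pow_zero, one_mul, map_zero] at h0
  exact coeff_zero_factorizationSeries_ne_zero h0

theorem C_rescale_exp_mul_X_pow_ne_zero (s : ℚ) (k : ℕ) :
    C (rescale s (exp ℚ)) * X ^ k ≠ (0 : ℚ⟦X⟧⟦X⟧) := by
  refine mul_ne_zero ?_ (pow_ne_zero k X_ne_zero)
  rw [Ne, map_eq_zero_iff C C_injective]
  intro h
  simpa using congrArg (coeff 0) h

theorem X_mul_rowBoundedSeries (n : ℕ) :
    X * (rescale (exp ℚ) (rowBoundedSeries (n + 2)) *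
        rescale (rescale (-1) (exp ℚ)) (rowBoundedSeries n)) =
      rowBoundedSeries (n + 1) *
          eulerDerivation _ (eulerDerivation _ (rowBoundedSeries (n + 1))) -
        eulerDerivation _ (rowBoundedSeries (n + 1)) ^ 2 := by
  have htoda := hankelDet_mul_hankelDet (eulerDerivation ℚ⟦X⟧) (n := n) (f := PowerSeries.mk
    fun l => ((l.factorial : ℚ)⁻¹ ^ 2) • rescale (rowContent (n + 1) l) (exp ℚ)) (by
      rw [hankelDet_rescale_rowContent]
      exact mul_ne_zero (C_rescale_exp_mul_X_pow_ne_zero _ _)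
        (rescale_rowBoundedSeries_ne_zero _ _))
  have hmiddle : rescale (0 : ℚ) (exp ℚ) = 1 := by simp [rescale_zero]
  simp only [hankelDet_rescale_rowContent, mul_eulerDerivation_sub_sq_of_monomial_mul,
    show ((n + 2 : ℕ) - (n + 1 : ℕ) : ℚ) = 1 by push_cast; ring, sub_self,
    show (n - (n + 1 : ℕ) : ℚ) = -1 by push_cast; ring, hmiddle, rescale_one,
    RingHom.id_apply] at htoda
  set c : ℕ → ℚ⟦X⟧⟦X⟧ := fun k => C (rescale (∑ i : Fin k, rowContent (n + 1) i) (exp ℚ)) *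
    X ^ (∑ i : Fin k, (i : ℕ)) with hc
  have hcontent : rowContent (n + 1) (n + 1) = rowContent (n + 1) n := by
    simp only [rowContent, Nat.choose_succ_succ' n 1, Nat.choose_one_right]
    push_cast
    ring
  have hmonomial : c (n + 2) * c n = X * c (n + 1) ^ 2 := by
    simp only [hc, Fin.sum_univ_castSucc, Fin.val_last, Fin.val_castSucc, hcontent,
      ← exp_mul_exp_eq_exp_add, map_mul]
    ring
  have hne : c (n + 1) ≠ 0 := C_rescale_exp_mul_X_pow_ne_zero _ _
  refine mul_left_cancel₀ (pow_ne_zero 2 hne) ?_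
  rw [← htoda]
  linear_combination (rescale (exp ℚ) (rowBoundedSeries (n + 2)) *
    rescale (rescale (-1) (exp ℚ)) (rowBoundedSeries n)) * -hmonomial

theorem X_mul_factorizationSeries :
    X * (rescale (exp ℚ) factorizationSeries *
        rescale (rescale (-1) (exp ℚ)) factorizationSeries) =
      factorizationSeries * eulerDerivation _ (eulerDerivation _ factorizationSeries) -
        eulerDerivation _ factorizationSeries ^ 2 := by
  ext1 m
  let q := Ideal.Quotient.mk (Ideal.span {(X : ℚ⟦X⟧⟦X⟧) ^ (m + 1)})
  have hq {f g : ℚ⟦X⟧⟦X⟧} : q f = q g ↔ ∀ k ≤ m, coeff k f = coeff k g := by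
    rw [Ideal.Quotient.eq, Ideal.mem_span_singleton, X_pow_dvd_iff]
    simp only [map_sub, sub_eq_zero, Nat.lt_succ_iff]
  have hrow {N : ℕ} (h : m ≤ N) : q factorizationSeries = q (rowBoundedSeries N) :=
    hq.2 fun k hk => (coeff_rowBoundedSeries (hk.trans h)).symm
  have hrescale (a : ℚ⟦X⟧) {f g : ℚ⟦X⟧⟦X⟧} (h : q f = q g) : q (rescale a f) = q (rescale a g) :=
    hq.2 fun k hk => by rw [coeff_rescale, coeff_rescale, hq.1 h k hk]
  have heuler {f g : ℚ⟦X⟧⟦X⟧} (h : q f = q g) : q (eulerDerivation _ f) = q (eulerDerivation _ g) :=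
    hq.2 fun k hk => by rw [coeff_eulerDerivation, coeff_eulerDerivation, hq.1 h k hk]
  refine hq.1 ?_ m le_rfl
  have h := congrArg q (X_mul_rowBoundedSeries m)
  rw [map_mul, map_mul, map_sub, map_mul, map_pow] at h ⊢
  have hmiddle := hrow (m.le_add_right 1)
  rw [hrescale _ (hrow (m.le_add_right 2)), hrescale _ (hrow le_rfl), heuler (heuler hmiddle),
    heuler hmiddle, hmiddle, h]

end Toda

section Transitive

open PowerSeries

/-- The generating series of the transitive factorizations of the identity of `S_d` into `r`
transpositions, with the conventions of `factorizationSeries`. -/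
noncomputable def transitiveSeries : ℚ⟦X⟧⟦X⟧ :=
  PowerSeries.mk fun d => PowerSeries.mk fun r =>
    (hurwitzTupleCount d r / (d.factorial * r.factorial) : ℚ)

/-- The exponential formula. -/
theorem eulerDerivation_factorizationSeries :
    eulerDerivation _ factorizationSeries =
      factorizationSeries * eulerDerivation _ transitiveSeries := by
  ext1 d
  rw [mul_comm, coeff_mul, coeff_eulerDerivation]
  cases d with
  | zero => simp [-coeff_zero_eq_constantCoeff, coeff_eulerDerivation]
  | succ d =>
    ext1 r
    simp only [Nat.sum_antidiagonal_succ, coeff_eulerDerivation, ← nsmul_eq_mul, zero_smul,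
      zero_add, map_sum, map_nsmul, smul_mul_assoc, coeff_mul]
    simp only [factorizationSeries, transitiveSeries, coeff_mk, factorizationCount_succ]
    push_cast
    rw [sum_div, smul_sum]
    refine sum_congr rfl fun p hp => ?_
    rw [sum_div, smul_sum, smul_sum]
    refine sum_congr rfl fun q hq => ?_
    obtain rfl := mem_antidiagonal.1 hp
    obtain rfl := mem_antidiagonal.1 hq
    simp only [Nat.cast_add_choose, Nat.factorial_succ, nsmul_eq_mul]
    push_cast
    field_simp

theorem eulerDerivation_eulerDerivation_eulerDerivation_transitiveSeries :
    eulerDerivation _ (eulerDerivation _ (eulerDerivation _ transitiveSeries)) =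
      (1 + (rescale (exp ℚ) (eulerDerivation _ transitiveSeries) +
        rescale (rescale (-1) (exp ℚ)) (eulerDerivation _ transitiveSeries) -
          2 * eulerDerivation _ transitiveSeries)) *
        eulerDerivation _ (eulerDerivation _ transitiveSeries) := by
  set τ := factorizationSeries with hτ
  set F := eulerDerivation _ transitiveSeries
  set p := rescale (exp ℚ) τ with hp
  set q := rescale (rescale (-1) (exp ℚ)) τ with hq
  have hθτ : eulerDerivation _ τ = τ * F := eulerDerivation_factorizationSeries
  have hθp : eulerDerivation _ p = p * rescale (exp ℚ) F := by
    rw [hp, eulerDerivation_rescale, hθτ, map_mul]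
  have hθq : eulerDerivation _ q = q * rescale (rescale (-1) (exp ℚ)) F := by
    rw [hq, eulerDerivation_rescale, hθτ, map_mul]
  have hθX : eulerDerivation ℚ⟦X⟧ X = X := by simpa using eulerDerivation_X_pow (R := ℚ⟦X⟧) 1
  have htoda : X * (p * q) = τ ^ 2 * eulerDerivation _ F := by
    rw [X_mul_factorizationSeries, hθτ, eulerDerivation_mul, hθτ]
    ring
  have hτ0 : τ ≠ 0 := by
    intro h
    exact coeff_zero_factorizationSeries_ne_zero (by rw [← hτ, h, map_zero])
  have hθtoda := congrArg (eulerDerivation _) htoda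
  simp only [eulerDerivation_mul, hθX, hθp, hθq, pow_two, hθτ] at hθtoda
  refine mul_left_cancel₀ (pow_ne_zero 2 hτ0) ?_
  linear_combination -hθtoda +
    (1 + rescale (exp ℚ) F + rescale (rescale (-1) (exp ℚ)) F) * htoda

/-- The symbol of the second difference operator, `k ↦ e^{ku} - 2 + e^{-ku}`. -/
noncomputable def secondDifference (k : ℕ) : ℚ⟦X⟧ :=
  rescale (k : ℚ) (exp ℚ) + rescale (-k : ℚ) (exp ℚ) - 2

theorem smul_coeff_transitiveSeries (n : ℕ) :
    (n * (n + 1) ^ 2 : ℚ) • coeff (n + 1) transitiveSeries =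
      ∑ p ∈ antidiagonal (n + 1), (p.1 * p.2 ^ 2 : ℚ) •
        (secondDifference p.1 * (coeff p.1 transitiveSeries * coeff p.2 transitiveSeries)) := by
  have h := congrArg (coeff (n + 1))
    eulerDerivation_eulerDerivation_eulerDerivation_transitiveSeries
  rw [add_mul, one_mul, map_add, coeff_mul] at h
  simp only [coeff_eulerDerivation, two_mul, map_sub, map_add, coeff_rescale, ← map_pow,
    exp_pow_eq_rescale_exp, rescale_rescale] at h
  have hterm (p : ℕ × ℕ) : (p.1 * p.2 ^ 2 : ℚ) •
      (secondDifference p.1 * (coeff p.1 transitiveSeries * coeff p.2 transitiveSeries)) =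
      (rescale (p.1 : ℚ) (exp ℚ) * (p.1 * coeff p.1 transitiveSeries) +
        rescale (p.1 * -1 : ℚ) (exp ℚ) * (p.1 * coeff p.1 transitiveSeries) -
        (p.1 * coeff p.1 transitiveSeries + p.1 * coeff p.1 transitiveSeries)) *
          (p.2 * (p.2 * coeff p.2 transitiveSeries)) := by
    rw [smul_eq_C_mul, map_mul, map_pow, map_natCast, map_natCast, secondDifference, mul_neg_one]
    ring
  rw [sum_congr rfl fun p _ => hterm p, ← sub_eq_iff_eq_add'.2 h, smul_eq_C_mul, map_mul, map_pow,
    map_add, map_natCast, map_one]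
  push_cast
  ring

end Transitive

section Expansion

open PowerSeries

section CommRing

variable {R : Type*} [CommRing R] {m n : ℕ} {S T : R⟦X⟧} {a b a' b' : R}

/-- The expansion `S = X ^ n * (a + b * X ^ 2 + O(X ^ 3))`. -/
def HasExpansion (n : ℕ) (S : R⟦X⟧) (a b : R) : Prop :=
  ∃ U : R⟦X⟧, S = X ^ n * U ∧ coeff 0 U = a ∧ coeff 1 U = 0 ∧ coeff 2 U = b

theorem HasExpansion.coeff_eq (h : HasExpansion n S a b) : coeff n S = a := by
  obtain ⟨U, rfl, rfl, -, -⟩ := h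
  simpa using coeff_X_pow_mul U n 0

theorem HasExpansion.coeff_add_two_eq (h : HasExpansion n S a b) : coeff (n + 2) S = b := by
  obtain ⟨U, rfl, -, -, rfl⟩ := h
  rw [add_comm, coeff_X_pow_mul]

theorem hasExpansion_coeff (h : ∀ k < n, coeff k S = 0) (h' : coeff (n + 1) S = 0) :
    HasExpansion n S (coeff n S) (coeff (n + 2) S) := by
  obtain ⟨U, rfl⟩ := X_pow_dvd_iff.2 h
  have hU (k : ℕ) : coeff (n + k) (X ^ n * U) = coeff k U := by rw [add_comm, coeff_X_pow_mul]
  exact ⟨U, rfl, (hU 0).symm, (hU 1).symm.trans h', (hU 2).symm⟩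

theorem hasExpansion_zero (n : ℕ) : HasExpansion n (0 : R⟦X⟧) 0 0 :=
  ⟨0, by simp⟩

theorem HasExpansion.smul (c : R) (h : HasExpansion n S a b) :
    HasExpansion n (c • S) (c * a) (c * b) := by
  obtain ⟨U, rfl, ha, hodd, hb⟩ := h
  exact ⟨c • U, by rw [mul_smul_comm], by rw [coeff_smul, ha, smul_eq_mul],
    by rw [coeff_smul, hodd, smul_zero], by rw [coeff_smul, hb, smul_eq_mul]⟩

theorem HasExpansion.add (h : HasExpansion n S a b) (h' : HasExpansion n T a' b') :
    HasExpansion n (S + T) (a + a') (b + b') := by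
  obtain ⟨U, rfl, ha, hodd, hb⟩ := h
  obtain ⟨V, rfl, ha', hodd', hb'⟩ := h'
  exact ⟨U + V, by rw [mul_add], by rw [map_add, ha, ha'], by rw [map_add, hodd, hodd', add_zero],
    by rw [map_add, hb, hb']⟩

theorem HasExpansion.mul (h : HasExpansion m S a b) (h' : HasExpansion n T a' b') :
    HasExpansion (m + n) (S * T) (a * a') (a * b' + b * a') := by
  obtain ⟨U, rfl, ha, hodd, hb⟩ := h
  obtain ⟨V, rfl, ha', hodd', hb'⟩ := h'
  refine ⟨U * V, by ring, ?_, ?_, ?_⟩ <;>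
    simp only [coeff_mul, Nat.antidiagonal_zero, Nat.sum_antidiagonal_succ, sum_singleton, ha, ha',
      hodd, hodd', hb, hb', zero_add, zero_mul, mul_zero, add_zero]

theorem HasExpansion.sum {ι : Type*} {s : Finset ι} {S : ι → R⟦X⟧} {a b : ι → R}
    (h : ∀ i ∈ s, HasExpansion n (S i) (a i) (b i)) :
    HasExpansion n (∑ i ∈ s, S i) (∑ i ∈ s, a i) (∑ i ∈ s, b i) := by
  classical
  induction s using Finset.induction_on with
  | empty => exact hasExpansion_zero n
  | insert i s hi ih =>
    simp only [sum_insert hi]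
    exact (h i (mem_insert_self i s)).add (ih fun j hj => h j (mem_insert_of_mem hj))

end CommRing

theorem hasExpansion_secondDifference (k : ℕ) :
    HasExpansion 2 (secondDifference k) ((k : ℚ) ^ 2) ((k : ℚ) ^ 4 / 12) := by
  have hcoeff (r : ℕ) : coeff r (secondDifference k) =
      (k : ℚ) ^ r / r.factorial + (-k : ℚ) ^ r / r.factorial - if r = 0 then 2 else 0 := by
    rw [secondDifference, map_sub, map_add, coeff_rescale, coeff_rescale, coeff_exp,
      ← map_ofNat (C (R := ℚ)) 2, coeff_C]
    simp [div_eq_mul_inv]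
  convert hasExpansion_coeff (n := 2) (S := secondDifference k) ?_ ?_ using 1
  · rw [hcoeff]; norm_num
  · rw [hcoeff]; norm_num [Nat.factorial]; ring
  · intro r hr
    rw [hcoeff]
    interval_cases r <;> norm_num
  · rw [hcoeff]; norm_num [Nat.factorial]; ring

/-- The Hurwitz number divided by the factorial of the number of branch points. -/
noncomputable def normalizedHurwitzNumber (g d : ℕ) : ℚ :=
  hurwitzNumber g d / (2 * g + 2 * d - 2).factorial

theorem coeff_coeff_transitiveSeries (g d : ℕ) :
    coeff (2 * g + 2 * d - 2) (coeff d transitiveSeries) = normalizedHurwitzNumber g d := by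
  rw [transitiveSeries, coeff_mk, coeff_mk, normalizedHurwitzNumber, hurwitzNumber, div_div]

theorem hurwitzTupleCount_one_zero : hurwitzTupleCount 1 0 = 1 := by
  rw [hurwitzTupleCount, Nat.card_eq_one_iff_unique]
  exact ⟨inferInstance, ⟨finZeroElim, finZeroElim, by simp,
    fun x y => ⟨1, one_mem _, Subsingleton.elim _ _⟩⟩⟩

theorem hurwitzTupleCount_one_succ (r : ℕ) : hurwitzTupleCount 1 (r + 1) = 0 := by
  rw [hurwitzTupleCount]
  refine @Nat.card_of_isEmpty _ ⟨fun τ => ?_⟩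
  obtain ⟨x, y, hxy, -⟩ := τ.2.1 0
  exact hxy (Subsingleton.elim x y)

theorem coeff_one_transitiveSeries : coeff 1 transitiveSeries = 1 := by
  ext r
  rw [transitiveSeries, coeff_mk, coeff_mk, coeff_one]
  cases r with
  | zero => simp [hurwitzTupleCount_one_zero]
  | succ r => simp [hurwitzTupleCount_one_succ]

theorem normalizedHurwitzNumber_one_one : normalizedHurwitzNumber 1 1 = 0 := by
  rw [← coeff_coeff_transitiveSeries, coeff_one_transitiveSeries, coeff_one, if_neg (by simp)]

theorem hasExpansion_smul_coeff_transitiveSeries {n : ℕ}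
    (h : ∀ k < n, HasExpansion (2 * k) (coeff (k + 1) transitiveSeries)
      (normalizedHurwitzNumber 0 (k + 1)) (normalizedHurwitzNumber 1 (k + 1))) :
    HasExpansion (2 * n) ((n * (n + 1) ^ 2 : ℚ) • coeff (n + 1) transitiveSeries)
      (∑ p ∈ antidiagonal (n + 1), (p.1 * p.2 ^ 2 : ℚ) *
        (p.1 ^ 2 * (normalizedHurwitzNumber 0 p.1 * normalizedHurwitzNumber 0 p.2)))
      (∑ p ∈ antidiagonal (n + 1), (p.1 * p.2 ^ 2 : ℚ) *
        (p.1 ^ 2 * (normalizedHurwitzNumber 0 p.1 * normalizedHurwitzNumber 1 p.2 +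
            normalizedHurwitzNumber 1 p.1 * normalizedHurwitzNumber 0 p.2) +
          p.1 ^ 4 / 12 * (normalizedHurwitzNumber 0 p.1 * normalizedHurwitzNumber 0 p.2))) := by
  rw [smul_coeff_transitiveSeries]
  refine HasExpansion.sum fun p hp => ?_
  rw [HasAntidiagonal.mem_antidiagonal] at hp
  rcases p with ⟨_ | k, _ | l⟩
  · simpa using hasExpansion_zero _
  · simpa using hasExpansion_zero _
  · simpa using hasExpansion_zero _
  · have hdegree : 2 * n = 2 + (2 * k + 2 * l) := by omega
    rw [hdegree]
    exact ((hasExpansion_secondDifference _).mul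
      ((h k (by omega)).mul (h l (by omega)))).smul _

theorem hasExpansion_coeff_transitiveSeries (n : ℕ) :
    HasExpansion (2 * n) (coeff (n + 1) transitiveSeries)
      (normalizedHurwitzNumber 0 (n + 1)) (normalizedHurwitzNumber 1 (n + 1)) := by
  induction n using Nat.strong_induction_on with
  | _ n ih =>
    suffices h : ∃ a b, HasExpansion (2 * n) (coeff (n + 1) transitiveSeries) a b by
      obtain ⟨a, b, h⟩ := h
      rw [← coeff_coeff_transitiveSeries, ← coeff_coeff_transitiveSeries,
        show 2 * 0 + 2 * (n + 1) - 2 = 2 * n by omega,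
        show 2 * 1 + 2 * (n + 1) - 2 = 2 * n + 2 by omega, h.coeff_eq, h.coeff_add_two_eq]
      exact h
    rcases n.eq_zero_or_pos with rfl | hn
    · rw [coeff_one_transitiveSeries]
      exact ⟨1, 0, 1, by simp [coeff_one]⟩
    · have hne : (n * (n + 1) ^ 2 : ℚ) ≠ 0 := by positivity
      have h := (hasExpansion_smul_coeff_transitiveSeries ih).smul (n * (n + 1) ^ 2 : ℚ)⁻¹
      rw [inv_smul_smul₀ hne] at h
      exact ⟨_, _, h⟩

theorem quadratic_recursion_normalizedHurwitzNumber_zero (d : ℕ) :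
    (d ^ 3 - d ^ 2 : ℚ) * normalizedHurwitzNumber 0 d =
      ∑ p ∈ antidiagonal d, (p.1 * p.2 ^ 2 : ℚ) *
        (p.1 ^ 2 * (normalizedHurwitzNumber 0 p.1 * normalizedHurwitzNumber 0 p.2)) := by
  cases d with
  | zero => simp
  | succ n =>
    rw [← (hasExpansion_smul_coeff_transitiveSeries fun k _ =>
      hasExpansion_coeff_transitiveSeries k).coeff_eq,
      ((hasExpansion_coeff_transitiveSeries n).smul _).coeff_eq]
    push_cast
    ring

theorem quadratic_recursion_normalizedHurwitzNumber_one (d : ℕ) :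
    (d ^ 3 - d ^ 2 : ℚ) * normalizedHurwitzNumber 1 d =
      ∑ p ∈ antidiagonal d, (p.1 * p.2 ^ 2 : ℚ) *
        (p.1 ^ 2 * (normalizedHurwitzNumber 0 p.1 * normalizedHurwitzNumber 1 p.2 +
            normalizedHurwitzNumber 1 p.1 * normalizedHurwitzNumber 0 p.2) +
          p.1 ^ 4 / 12 * (normalizedHurwitzNumber 0 p.1 * normalizedHurwitzNumber 0 p.2)) := by
  cases d with
  | zero => simp
  | succ n =>
    rw [← (hasExpansion_smul_coeff_transitiveSeries fun k _ =>
      hasExpansion_coeff_transitiveSeries k).coeff_add_two_eq,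
      ((hasExpansion_coeff_transitiveSeries n).smul _).coeff_add_two_eq]
    push_cast
    ring

end Expansion

section Euler

open PowerSeries

section Field

variable {K : Type*} [Field K]

theorem eq_zero_of_eulerDerivation_eq_mul {Z W : K⟦X⟧} (h : eulerDerivation K Z = Z * W)
    (hZ : ∀ n : ℕ, (n : K) = constantCoeff W → coeff n Z = 0) : Z = 0 := by
  ext n
  induction n using Nat.strong_induction_on with
  | _ n ih =>
    by_cases hn : (n : K) = constantCoeff W
    · exact hZ n hn
    · have hcoeff := congrArg (coeff n) h
      rw [coeff_eulerDerivation, coeff_mul, sum_eq_single_of_mem (n, 0) (by simp)] at hcoeff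
      · rw [map_zero]
        by_contra hne
        exact hn (mul_right_cancel₀ hne (by simpa [mul_comm] using hcoeff))
      · rintro ⟨i, j⟩ hij hne
        obtain rfl := HasAntidiagonal.mem_antidiagonal.1 hij
        rw [ih i (by grind), map_zero, zero_mul]

/-- If `T = θ²A`, the first equation integrates to `T = X e^{θA}`, and the second one is its
linearization along `U`, with the source term `c θ³T`. -/
theorem mul_eulerDerivation_eq_of_linearized [CharZero K] {B T U : K⟦X⟧} (c : K)
    (hT0 : constantCoeff T = 0) (hT : eulerDerivation K T = T + eulerDerivation K T * T)
    (hU : U = eulerDerivation K (eulerDerivation K B)) (hU1 : coeff 1 U = 0)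
    (hθU : eulerDerivation K U = U + eulerDerivation K T * U +
      (eulerDerivation K U + c • eulerDerivation K (eulerDerivation K (eulerDerivation K T))) * T) :
    2 * ((1 - T) * eulerDerivation K B) = c • (eulerDerivation K T - T) := by
  set θ := eulerDerivation K with hθ
  have hθ0 (f : K⟦X⟧) : constantCoeff (θ f) = 0 := by
    rw [← coeff_zero_eq_constantCoeff_apply, hθ, coeff_eulerDerivation, Nat.cast_zero, zero_mul]
  have hθmul (f g : K⟦X⟧) : θ (f * g) = f * θ g + g * θ f := eulerDerivation_mul f g
  set V := U + c • θ (θ T) with hV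
  have hUT : U = T * V := by
    refine sub_eq_zero.1 (eq_zero_of_eulerDerivation_eq_mul (W := 1 + θ T) ?_ fun n hn => ?_)
    · rw [← hθ, map_sub, hθmul T, hV, map_add, Derivation.map_smul]
      linear_combination hθU - V * hT
    · rw [map_add, hθ0, map_one, add_zero, Nat.cast_eq_one] at hn
      have hU0 : constantCoeff U = 0 := hU ▸ hθ0 _
      have hV0 : constantCoeff V = 0 := by simp [hV, hθ0, hU0]
      simp [hn, coeff_mul, Nat.antidiagonal_succ, hT0, hU1, hV0]
  have hT1 : 1 - T ≠ 0 := fun h => by simpa [hT0] using congrArg constantCoeff h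
  have hθB : 2 * θ B = c • θ T ^ 2 := by
    refine sub_eq_zero.1 (eq_zero_of_eulerDerivation_eq_mul (W := 0) ?_ fun n hn => ?_)
    · refine mul_left_cancel₀ hT1 ?_
      rw [← hθ, map_sub, two_mul, map_add, ← hU, Derivation.map_smul, sq, hθmul]
      simp only [hV, smul_eq_C_mul] at hUT ⊢
      linear_combination 2 * hUT - 2 * C c * θ (θ T) * hT
    · rw [map_zero, Nat.cast_eq_zero] at hn
      simp [hn, hθ0]
  simp only [smul_eq_C_mul] at hθB ⊢
  linear_combination (1 - T) * hθB + C c * (θ T - 1) * hT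

end Field

/-- The generating series `∑ d, H_{g,d} X ^ d / (2g - 2 + 2d)!` of the genus `g` Hurwitz numbers. -/
noncomputable def hurwitzSeries (g : ℕ) : ℚ⟦X⟧ :=
  PowerSeries.mk (normalizedHurwitzNumber g)

theorem coeff_eulerDerivation_iterate_hurwitzSeries (g k d : ℕ) :
    coeff d ((eulerDerivation ℚ)^[k] (hurwitzSeries g)) =
      (d : ℚ) ^ k * normalizedHurwitzNumber g d := by
  rw [coeff_eulerDerivation_iterate, hurwitzSeries, coeff_mk]

theorem eulerDerivation_iterate_hurwitzSeries_zero :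
    (eulerDerivation ℚ)^[3] (hurwitzSeries 0) = (eulerDerivation ℚ)^[2] (hurwitzSeries 0) +
      (eulerDerivation ℚ)^[3] (hurwitzSeries 0) * (eulerDerivation ℚ)^[2] (hurwitzSeries 0) := by
  ext d
  simp only [map_add, coeff_mul, coeff_eulerDerivation_iterate_hurwitzSeries]
  rw [← sub_eq_iff_eq_add', ← sub_mul, quadratic_recursion_normalizedHurwitzNumber_zero]
  exact sum_congr rfl fun p _ => by ring

theorem eulerDerivation_iterate_hurwitzSeries_one :
    (eulerDerivation ℚ)^[3] (hurwitzSeries 1) = (eulerDerivation ℚ)^[2] (hurwitzSeries 1) +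
      (eulerDerivation ℚ)^[3] (hurwitzSeries 0) * (eulerDerivation ℚ)^[2] (hurwitzSeries 1) +
      ((eulerDerivation ℚ)^[3] (hurwitzSeries 1) +
        (12⁻¹ : ℚ) • (eulerDerivation ℚ)^[5] (hurwitzSeries 0)) *
          (eulerDerivation ℚ)^[2] (hurwitzSeries 0) := by
  ext d
  simp only [map_add, coeff_mul, coeff_smul, smul_eq_mul,
    coeff_eulerDerivation_iterate_hurwitzSeries]
  rw [add_assoc, ← sub_eq_iff_eq_add', ← sub_mul, quadratic_recursion_normalizedHurwitzNumber_one,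
    ← sum_add_distrib]
  exact sum_congr rfl fun p _ => by ring

theorem recursion_normalizedHurwitzNumber_one (d : ℕ) :
    d * normalizedHurwitzNumber 1 d =
      ((d : ℚ) ^ 3 - d ^ 2) / 24 * normalizedHurwitzNumber 0 d +
        ∑ p ∈ antidiagonal d, ((p.1 : ℚ) ^ 2 * normalizedHurwitzNumber 0 p.1) *
          (p.2 * normalizedHurwitzNumber 1 p.2) := by
  have hcoeff (g k n : ℕ) := coeff_eulerDerivation_iterate_hurwitzSeries g k n
  have hcoeff_one (g n : ℕ) : coeff n (eulerDerivation ℚ (hurwitzSeries g)) =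
      n * normalizedHurwitzNumber g n := by rw [← pow_one (n : ℚ)]; exact hcoeff g 1 n
  have hT0 : constantCoeff ((eulerDerivation ℚ)^[2] (hurwitzSeries 0)) = 0 := by
    rw [← coeff_zero_eq_constantCoeff_apply, hcoeff, Nat.cast_zero, zero_pow two_ne_zero, zero_mul]
  have hU1 : coeff 1 ((eulerDerivation ℚ)^[2] (hurwitzSeries 1)) = 0 := by
    rw [hcoeff, normalizedHurwitzNumber_one_one, mul_zero]
  have h := congrArg (coeff d) (mul_eulerDerivation_eq_of_linearized 12⁻¹ hT0
    eulerDerivation_iterate_hurwitzSeries_zero rfl hU1 eulerDerivation_iterate_hurwitzSeries_one)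
  rw [← Function.iterate_succ_apply' (eulerDerivation ℚ) 2] at h
  simp only [two_mul, sub_mul, one_mul, map_add, map_sub, coeff_smul, smul_eq_mul, coeff_mul,
    hcoeff, hcoeff_one] at h
  linear_combination h / 2

end Euler

section Recursion

theorem sum_antidiagonal_eq_sum_Icc {M : Type*} [AddCommMonoid M] {d : ℕ} (f : ℕ → ℕ → M)
    (h0 : f 0 d = 0) (hd : f d 0 = 0) :
    ∑ p ∈ antidiagonal d, f p.1 p.2 = ∑ i ∈ Icc 1 (d - 1), f i (d - i) := by
  rw [Nat.sum_antidiagonal_eq_sum_range_succ f]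
  refine (sum_subset (fun i hi => ?_) fun i hi hi' => ?_).symm
  · rw [mem_Icc] at hi
    rw [mem_range]
    lia
  · rw [mem_range] at hi
    rw [mem_Icc] at hi'
    obtain rfl | rfl : i = 0 ∨ i = d := by lia
    · rw [Nat.sub_zero, h0]
    · rw [Nat.sub_self, hd]

theorem hurwitzNumber_eq_normalizedHurwitzNumber_mul_factorial (g d : ℕ) :
    hurwitzNumber g d = normalizedHurwitzNumber g d * (2 * g + 2 * d - 2).factorial := by
  rw [normalizedHurwitzNumber, div_mul_cancel₀ _ (Nat.cast_ne_zero.2 (Nat.factorial_ne_zero _))]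

theorem hurwitzNumber_zero_eq (d : ℕ) :
    hurwitzNumber 0 d = normalizedHurwitzNumber 0 d * (2 * d - 2).factorial := by
  rw [hurwitzNumber_eq_normalizedHurwitzNumber_mul_factorial, mul_zero, zero_add]

theorem hurwitzNumber_one_eq (d : ℕ) :
    hurwitzNumber 1 d = normalizedHurwitzNumber 1 d * (2 * d).factorial := by
  rw [hurwitzNumber_eq_normalizedHurwitzNumber_mul_factorial, mul_one, Nat.add_sub_cancel_left]

theorem choose_mul_hurwitzNumber_zero_mul_hurwitzNumber_one {i d : ℕ} (hi : 1 ≤ i) (hid : i ≤ d) :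
    ((2 * d - 2).choose (2 * i - 2) : ℚ) * (hurwitzNumber 0 i * hurwitzNumber 1 (d - i)) =
      (2 * d - 2).factorial *
        (normalizedHurwitzNumber 0 i * normalizedHurwitzNumber 1 (d - i)) := by
  rw [Nat.cast_choose ℚ (by lia), show 2 * d - 2 - (2 * i - 2) = 2 * (d - i) by lia,
    hurwitzNumber_zero_eq, hurwitzNumber_one_eq]
  field_simp

theorem cast_factorial_two_mul {d : ℕ} (hd : 1 ≤ d) :
    ((2 * d).factorial : ℚ) = 2 * d * (2 * d - 1) * (2 * d - 2).factorial := by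
  obtain ⟨n, rfl⟩ := Nat.exists_eq_add_of_le' hd
  rw [show 2 * (n + 1) - 2 = 2 * n by lia, show 2 * (n + 1) = 2 * n + 1 + 1 by ring,
    Nat.factorial_succ, Nat.factorial_succ]
  push_cast
  ring

theorem sum_choose_mul_hurwitzNumber_mul_hurwitzNumber (d : ℕ) :
    ∑ i ∈ Icc 1 (d - 1), ((2 * d - 2).choose (2 * i - 2) : ℚ) * (4 * d - 2) * i ^ 2 *
        (d - i : ℕ) * hurwitzNumber 0 i * hurwitzNumber 1 (d - i) =
      (4 * d - 2) * (2 * d - 2).factorial * ∑ p ∈ antidiagonal d,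
        ((p.1 : ℚ) ^ 2 * normalizedHurwitzNumber 0 p.1) *
          (p.2 * normalizedHurwitzNumber 1 p.2) := by
  rw [sum_antidiagonal_eq_sum_Icc (fun i j : ℕ => ((i : ℚ) ^ 2 * normalizedHurwitzNumber 0 i) *
    (j * normalizedHurwitzNumber 1 j)) (by simp) (by simp), mul_sum]
  refine sum_congr rfl fun i hi => ?_
  rw [mem_Icc] at hi
  linear_combination (4 * d - 2 : ℚ) * i ^ 2 * (d - i : ℕ) *
    choose_mul_hurwitzNumber_zero_mul_hurwitzNumber_one hi.1 (by lia : i ≤ d)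

end Recursion

end Hurwitz

/-- The genus `1` recursion for the Hurwitz numbers:
`H_{1,d} = (d/6) C(d,2) (2d-1) H_{0,d}
  + ∑_{i=1}^{d-1} C(2d-2, 2i-2) (4d-2) i² (d-i) H_{0,i} H_{1,d-i}`. -/
theorem genus_one_hurwitz_recursion (d : ℕ) (hd : 1 ≤ d) :
    hurwitzNumber 1 d =
      ((d : ℚ) / 6) * (Nat.choose d 2 : ℚ) * (2 * (d : ℚ) - 1) * hurwitzNumber 0 d +
        ∑ i ∈ Finset.Icc 1 (d - 1),
          (Nat.choose (2 * d - 2) (2 * i - 2) : ℚ) * (4 * (d : ℚ) - 2) * (i : ℚ) ^ 2 *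
            ((d - i : ℕ) : ℚ) * hurwitzNumber 0 i * hurwitzNumber 1 (d - i) := by
  rw [Hurwitz.sum_choose_mul_hurwitzNumber_mul_hurwitzNumber, Hurwitz.hurwitzNumber_zero_eq,
    Hurwitz.hurwitzNumber_one_eq, Hurwitz.cast_factorial_two_mul hd, Nat.cast_choose_two]
  linear_combination (4 * d - 2 : ℚ) * (2 * d - 2).factorial *
    Hurwitz.recursion_normalizedHurwitzNumber_one d
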